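/- Let s ∈ [0,1] and p ∈ (2,∞). There is a constant C = C(s,p) such that for every Schwartz function G : ℂ → ℂ and every k ∈ ℂ, ‖∂̄⁻¹[e_{−k} G]‖_{L^p(ℂ)} ≤ C (1+|k|)^{−s} ( ‖G‖_{L^{2p/(p+2)}(ℂ)} + ‖D^s G‖_{L^{2p/(p+2)}(ℂ)} ). -/

import Mathlib

open MeasureTheory Complex ComplexConjugate Filter Bornology
open scoped ENNReal Topology SchwartzMap

noncomputable section

/-- `e_k(z) = exp(i(conj k · z + k · conj z)/2)`. -/
def ek (k z : ℂ) : ℂ := Complex.exp (Complex.I * (conj k * z + k * conj z) / 2)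

/-- The solid Cauchy transform `∂̄⁻¹[h](z) = (1/π) ∫ h(w)/(z-w) dA(w)`. -/
def dbarInv (h : ℂ → ℂ) (z : ℂ) : ℂ := (Real.pi : ℂ)⁻¹ * ∫ w : ℂ, h w / (z - w)

/-- The solid Cauchy transform `∂_z⁻¹[h](z) = (1/π) ∫ h(w)/(conj z - conj w) dA(w)`. -/
def dzInv (h : ℂ → ℂ) (z : ℂ) : ℂ := (Real.pi : ℂ)⁻¹ * ∫ w : ℂ, h w / (conj z - conj w)

/-- The operator `S^k_q[F] = ∂̄⁻¹[e_{-k} q ∂_z⁻¹[e_k conj(q) F]]`. -/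
def Sk (k : ℂ) (q F : ℂ → ℂ) : ℂ → ℂ :=
  dbarInv fun z => ek (-k) z * q z * dzInv (fun w => ek k w * conj (q w) * F w) z

/-- The Fourier transform on `ℂ ≅ ℝ²`. -/
def FT (f : ℂ → ℂ) (ξ : ℂ) : ℂ :=
  ∫ z : ℂ, Complex.exp (-(2 * Real.pi * Complex.I) * ((z.re * ξ.re + z.im * ξ.im : ℝ) : ℂ)) * f z

/-- The inverse Fourier transform on `ℂ ≅ ℝ²`. -/
def FTinv (f : ℂ → ℂ) (x : ℂ) : ℂ :=
  ∫ ξ : ℂ, Complex.exp ((2 * Real.pi * Complex.I) * ((x.re * ξ.re + x.im * ξ.im : ℝ) : ℂ)) * f ξ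

/-- `D^s`, the Fourier multiplier with symbol `|ξ|^s`. -/
def Ds (s : ℝ) (f : ℂ → ℂ) : ℂ → ℂ :=
  FTinv fun ξ => ((‖ξ‖ ^ s : ℝ) : ℂ) * FT f ξ

/-- The weighted Sobolev norm
`‖q‖_{H^{s,s}} = max {‖q‖₂, ‖D^s q‖₂, ‖|·|^s q‖₂}`, where by Plancherel
`‖D^s q‖₂ = ‖ |ξ|^s (FT q)(ξ) ‖₂`. -/
def HssNorm (s : ℝ) (q : ℂ → ℂ) : ℝ≥0∞ :=
  max (eLpNorm q 2 volume)
    (max (eLpNorm (fun ξ : ℂ => ((‖ξ‖ ^ s : ℝ) : ℂ) * FT q ξ) 2 volume)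
      (eLpNorm (fun z : ℂ => ((‖z‖ ^ s : ℝ) : ℂ) * q z) 2 volume))

/-- The Cauchy–Riemann operator `∂̄ = (∂/∂z₁ + i ∂/∂z₂)/2`. -/
def dbar (G : ℂ → ℂ) (z : ℂ) : ℂ := (fderiv ℝ G z 1 + Complex.I * fderiv ℝ G z Complex.I) / 2

end

/-! The Cauchy kernel `1/z` lies in weak `L²`, so `∂̄⁻¹` maps `L^{2p/(p+2)}` to `L^p`; this settles
`|k| ≤ 1` and `s = 0`. For `|k| ≥ 1` regularise `G` by the heat flow at time `t = |k|⁻²`. The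
difference `G - e^{tΔ}G` has size `t^{s/2} = |k|^{-s}` relative to `D^s G` in `L^{2p/(p+2)}`. On
`e^{tΔ}G` one integrates by parts twice against `e_{-k}`, each time gaining `|k|⁻¹` and losing a
derivative, hence `t^{-1/2} = |k|`. Every bound on `e^{tΔ}G` in terms of `D^s G` comes from the
subordination formula `|ξ|^{-s} = (2π)^s / Γ(s/2) · ∫₀^∞ τ^{s/2-1} e^{-4π²|ξ|²τ} dτ`. -/

theorem setLIntegral_Ioo_ofReal_rpow {a R : ℝ} (ha : -1 < a) (hR : 0 ≤ R) :
    ∫⁻ t in Set.Ioo 0 R, ENNReal.ofReal (t ^ a) = ENNReal.ofReal (R ^ (a + 1) / (a + 1)) := by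
  have hint : IntegrableOn (fun t : ℝ => t ^ a) (Set.Ioc 0 R) :=
    (intervalIntegrable_iff_integrableOn_Ioc_of_le hR).1
      (intervalIntegral.intervalIntegrable_rpow' ha)
  rw [setLIntegral_congr Ioo_ae_eq_Ioc, ← ofReal_integral_eq_lintegral_ofReal hint,
    ← intervalIntegral.integral_of_le hR, integral_rpow (Or.inl ha),
    Real.zero_rpow (by linarith), sub_zero]
  filter_upwards [ae_restrict_mem measurableSet_Ioc] with t ht
  exact Real.rpow_nonneg ht.1.le _

theorem setLIntegral_Ioi_ofReal_rpow {a R : ℝ} (ha : a < -1) (hR : 0 < R) :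
    ∫⁻ t in Set.Ioi R, ENNReal.ofReal (t ^ a) = ENNReal.ofReal (-R ^ (a + 1) / (a + 1)) := by
  rw [← ofReal_integral_eq_lintegral_ofReal (integrableOn_Ioi_rpow_of_lt ha hR),
    integral_Ioi_rpow_of_lt ha hR]
  filter_upwards [ae_restrict_mem measurableSet_Ioi] with t ht
  exact Real.rpow_nonneg (hR.trans ht).le _

theorem lintegral_Ioi_indicator_ofReal_lt {a : ℝ} (ha : -1 < a) (y : ℝ≥0∞) :
    ∫⁻ t in Set.Ioi 0, {t | ENNReal.ofReal t < y}.indicator (fun t => ENNReal.ofReal (t ^ a)) t =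
      ENNReal.ofReal (a + 1)⁻¹ * y ^ (a + 1) := by
  have ha1 : 0 < a + 1 := by linarith
  rw [setLIntegral_indicator (measurableSet_lt (by fun_prop) measurable_const)]
  rcases eq_or_ne y ⊤ with rfl | hy
  · rw [ENNReal.top_rpow_of_pos ha1, ENNReal.mul_top (by simpa using ha1)]
    have hnot : ¬ HasFiniteIntegral (fun t : ℝ => t ^ a) (volume.restrict (Set.Ioi 0)) := fun h =>
      not_integrableOn_Ioi_rpow a ⟨by fun_prop, h⟩
    rw [hasFiniteIntegral_iff_ofReal, not_lt_top_iff] at hnot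
    · simpa using hnot
    · filter_upwards [ae_restrict_mem measurableSet_Ioi] with t ht
      exact Real.rpow_nonneg (le_of_lt ht) _
  · have hset : {t : ℝ | ENNReal.ofReal t < y} ∩ Set.Ioi 0 = Set.Ioo 0 y.toReal := by
      ext t
      simp only [Set.mem_inter_iff, Set.mem_ofPred_eq, Set.mem_Ioi, Set.mem_Ioo]
      exact ⟨fun h => ⟨h.2, (ENNReal.ofReal_lt_iff_lt_toReal h.2.le hy).1 h.1⟩,
        fun h => ⟨(ENNReal.ofReal_lt_iff_lt_toReal h.1.le hy).2 h.2, h.1⟩⟩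
    rw [hset, setLIntegral_Ioo_ofReal_rpow ha ENNReal.toReal_nonneg, div_eq_inv_mul,
      ENNReal.ofReal_mul (by positivity), ← ENNReal.ofReal_rpow_of_nonneg ENNReal.toReal_nonneg
        ha1.le, ENNReal.ofReal_toReal hy]

theorem lintegral_rpow_eq_lintegral_meas_ofReal_lt {α : Type*} [MeasurableSpace α]
    {μ : Measure α} [SFinite μ] {f : α → ℝ≥0∞} (hf : Measurable f) {p : ℝ} (hp : 0 < p) :
    ∫⁻ x, f x ^ p ∂μ = ENNReal.ofReal p *
      ∫⁻ t in Set.Ioi 0, μ {x | ENNReal.ofReal t < f x} * ENNReal.ofReal (t ^ (p - 1)) := by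
  have hlevel : ∀ t : ℝ, μ {x | ENNReal.ofReal t < f x} * ENNReal.ofReal (t ^ (p - 1)) =
      ∫⁻ x, {t | ENNReal.ofReal t < f x}.indicator
        (fun t => ENNReal.ofReal (t ^ (p - 1))) t ∂μ := by
    intro t
    rw [mul_comm, ← lintegral_indicator_const (measurableSet_lt measurable_const hf)]
    rfl
  have hmeas : Measurable (Function.uncurry fun (t : ℝ) (x : α) =>
      {t | ENNReal.ofReal t < f x}.indicator (fun t => ENNReal.ofReal (t ^ (p - 1))) t) :=
    Measurable.ite (measurableSet_lt measurable_fst.ennreal_ofReal (hf.comp measurable_snd))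
      (by fun_prop) measurable_const
  simp_rw [hlevel]
  rw [lintegral_lintegral_swap hmeas.aemeasurable,
    ← lintegral_const_mul _ (hmeas.lintegral_prod_left)]
  refine lintegral_congr fun x => ?_
  rw [lintegral_Ioi_indicator_ofReal_lt (by linarith), sub_add_cancel, ← mul_assoc,
    ← ENNReal.ofReal_mul hp.le, mul_inv_cancel₀ hp.ne', ENNReal.ofReal_one, one_mul]

theorem lintegral_Ioi_indicator_rpow_div_lt {B γ a : ℝ} (hB : 0 < B) (hγ : 0 < γ) (ha : -1 < a)
    (y : ℝ≥0∞) :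
    ∫⁻ t in Set.Ioi 0, {t | ENNReal.ofReal (t ^ γ / B) < y}.indicator
        (fun t => ENNReal.ofReal (t ^ a)) t =
      ENNReal.ofReal (B ^ ((a + 1) / γ) / (a + 1)) * y ^ ((a + 1) / γ) := by
  have hiff : ∀ t ∈ Set.Ioi (0 : ℝ), ENNReal.ofReal (t ^ γ / B) < y ↔
      ENNReal.ofReal t < (ENNReal.ofReal B * y) ^ γ⁻¹ := by
    intro t ht
    rw [ENNReal.lt_rpow_inv_iff hγ, ENNReal.ofReal_rpow_of_pos ht, ENNReal.ofReal_div_of_pos hB,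
      ENNReal.div_lt_iff (Or.inl (ENNReal.ofReal_pos.2 hB).ne') (Or.inl ENNReal.ofReal_ne_top),
      mul_comm]
  have ha1 : 0 < a + 1 := by linarith
  calc _ = ∫⁻ t in Set.Ioi 0, {t | ENNReal.ofReal t < (ENNReal.ofReal B * y) ^ γ⁻¹}.indicator
        (fun t => ENNReal.ofReal (t ^ a)) t :=
      setLIntegral_congr_fun measurableSet_Ioi fun t ht => by
        simp only [Set.indicator_apply, Set.mem_ofPred_eq, hiff t ht]
    _ = _ := by
      rw [lintegral_Ioi_indicator_ofReal_lt ha, ← ENNReal.rpow_mul, inv_mul_eq_div,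
        ENNReal.mul_rpow_of_nonneg _ _ (by positivity),
        ENNReal.ofReal_rpow_of_nonneg hB.le (by positivity), ← mul_assoc,
        ← ENNReal.ofReal_mul (by positivity), inv_mul_eq_div]

theorem lintegral_Ioi_rpow_mul_setLIntegral_lt {α : Type*} [MeasurableSpace α] {μ : Measure α}
    [SFinite μ] {u : α → ℝ≥0∞} (hu : Measurable u) {B γ a : ℝ} (hB : 0 < B) (hγ : 0 < γ)
    (ha : -1 < a) :
    ∫⁻ t in Set.Ioi (0 : ℝ), ENNReal.ofReal (t ^ a) *
        ∫⁻ x in {x | ENNReal.ofReal (t ^ γ / B) < u x}, u x ∂μ =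
      ENNReal.ofReal (B ^ ((a + 1) / γ) / (a + 1)) * ∫⁻ x, u x ^ ((a + 1) / γ + 1) ∂μ := by
  have ha1 : 0 < (a + 1) / γ := div_pos (by linarith) hγ
  set F : ℝ → α → ℝ≥0∞ := fun t x => {t | ENNReal.ofReal (t ^ γ / B) < u x}.indicator
    (fun t => ENNReal.ofReal (t ^ a)) t * u x with hF_def
  have hF : Measurable (Function.uncurry F) :=
    (Measurable.ite (measurableSet_lt (by fun_prop) (hu.comp measurable_snd)) (by fun_prop)
      measurable_const).mul (hu.comp measurable_snd)
  have houter : ∀ t, ENNReal.ofReal (t ^ a) *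
      ∫⁻ x in {x | ENNReal.ofReal (t ^ γ / B) < u x}, u x ∂μ = ∫⁻ x, F t x ∂μ := fun t => by
    rw [← lintegral_const_mul _ hu, ← lintegral_indicator (measurableSet_lt measurable_const hu)]
    exact lintegral_congr fun x => by simp [F, Set.indicator_apply]
  have hinner : ∀ x, ∫⁻ t in Set.Ioi 0, F t x =
      ENNReal.ofReal (B ^ ((a + 1) / γ) / (a + 1)) * u x ^ ((a + 1) / γ + 1) := fun x => by
    rw [hF_def, lintegral_mul_const _ (Measurable.indicator (by fun_prop)
        (measurableSet_lt (by fun_prop) measurable_const)),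
      lintegral_Ioi_indicator_rpow_div_lt hB hγ ha, mul_assoc,
      ENNReal.rpow_add_of_nonneg _ _ ha1.le zero_le_one, ENNReal.rpow_one]
  rw [lintegral_congr houter, lintegral_lintegral_swap hF.aemeasurable, lintegral_congr hinner,
    lintegral_const_mul _ (by fun_prop)]

-- A distributional inequality whose right side only sees `u` above a level depending on `t` gives
-- the strong-type bound directly, so Hardy–Littlewood–Sobolev needs no interpolation theorem.
theorem lintegral_rpow_le_of_meas_lt_le {α : Type*} [MeasurableSpace α] {μ : Measure α} [SFinite μ]
    {u v : α → ℝ≥0∞} (hu : Measurable u) (hv : Measurable v) {p q B : ℝ} (hp : 0 < p) (hq : 1 < q)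
    (hB : 0 < B)
    (hlevel : ∀ t : ℝ, 0 < t → μ {x | ENNReal.ofReal t < v x} ≤
      ENNReal.ofReal (B * t ^ (-(p / q))) *
        ∫⁻ x in {x | ENNReal.ofReal (t ^ (p / q) / B) < u x}, u x ∂μ) :
    ∫⁻ x, v x ^ p ∂μ ≤ ENNReal.ofReal (B ^ q * (q / (q - 1))) * ∫⁻ x, u x ^ q ∂μ := by
  have hq1 : 0 < q - 1 := by linarith
  have hγ : 0 < p / q := by positivity
  have hexp : p - 1 - p / q + 1 = p / q * (q - 1) := by field_simp; ring
  have hbound : ∀ t ∈ Set.Ioi (0 : ℝ), μ {x | ENNReal.ofReal t < v x} *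
      ENNReal.ofReal (t ^ (p - 1)) ≤ ENNReal.ofReal B * (ENNReal.ofReal (t ^ (p - 1 - p / q)) *
        ∫⁻ x in {x | ENNReal.ofReal (t ^ (p / q) / B) < u x}, u x ∂μ) := by
    intro t (ht : 0 < t)
    refine (mul_le_mul_left (hlevel t ht) _).trans_eq ?_
    rw [mul_right_comm, ← ENNReal.ofReal_mul (by positivity), mul_assoc B, ← Real.rpow_add ht,
      ← mul_assoc, ← ENNReal.ofReal_mul hB.le]
    ring_nf
  rw [lintegral_rpow_eq_lintegral_meas_ofReal_lt hv hp]
  refine (mul_le_mul_right (setLIntegral_mono' measurableSet_Ioi hbound) _).trans_eq ?_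
  rw [lintegral_const_mul' _ _ ENNReal.ofReal_ne_top,
    lintegral_Ioi_rpow_mul_setLIntegral_lt hu hB hγ (by nlinarith), hexp,
    mul_div_cancel_left₀ _ hγ.ne', sub_add_cancel, ← mul_assoc, ← mul_assoc,
    ← ENNReal.ofReal_mul hp.le, ← ENNReal.ofReal_mul (by positivity), Real.rpow_sub_one hB.ne']
  congr 2
  field_simp

theorem lintegral_inv_mul_rpow {α : Type*} [MeasurableSpace α] {μ : Measure α} {f : α → ℝ≥0∞}
    {p : ℝ} (hp : 0 < p) {N : ℝ≥0∞} (hN : N ≠ 0) :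
    ∫⁻ x, (N⁻¹ * f x) ^ p ∂μ = (∫⁻ x, f x ^ p ∂μ) / N ^ p := by
  simp_rw [ENNReal.mul_rpow_of_nonneg _ _ hp.le, ENNReal.inv_rpow]
  rw [lintegral_const_mul' _ _ (by simp [hN, hp.le]), mul_comm, div_eq_mul_inv]

section Truncation

variable {α : Type*} [MeasurableSpace α] {μ : Measure α} [SFinite μ] {K : α → ℝ≥0∞} {A r : ℝ}

theorem setLIntegral_lt_le_of_meas_lt_le (hK : Measurable K) (hA : 0 ≤ A) (hr : 1 < r)
    (hweak : ∀ t : ℝ, 0 < t → μ {x | ENNReal.ofReal t < K x} ≤ ENNReal.ofReal (A * t ^ (-r)))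
    {T : ℝ} (hT : 0 < T) :
    ∫⁻ x in {x | ENNReal.ofReal T < K x}, K x ∂μ ≤
      ENNReal.ofReal (A * r / (r - 1) * T ^ (1 - r)) := by
  have hr1 : 0 < r - 1 := by linarith
  have hlow : ∀ t ∈ Set.Ioc 0 T, (μ.restrict {x | ENNReal.ofReal T < K x})
      {x | ENNReal.ofReal t < K x} ≤ ENNReal.ofReal (A * T ^ (-r)) := fun t _ =>
    ((measure_mono (Set.subset_univ _)).trans_eq
      (Measure.restrict_apply_univ _)).trans (hweak T hT)
  have hhigh : ∀ t ∈ Set.Ioi T, (μ.restrict {x | ENNReal.ofReal T < K x})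
      {x | ENNReal.ofReal t < K x} ≤ ENNReal.ofReal A * ENNReal.ofReal (t ^ (-r)) := fun t ht =>
    (Measure.restrict_apply_le _ _).trans
      ((hweak t (hT.trans ht)).trans_eq (ENNReal.ofReal_mul hA))
  have hlayer := lintegral_rpow_eq_lintegral_meas_ofReal_lt
    (μ := μ.restrict {x | ENNReal.ofReal T < K x}) hK one_pos
  simp only [ENNReal.rpow_one, ENNReal.ofReal_one, one_mul, sub_self, Real.rpow_zero,
    mul_one] at hlayer
  rw [hlayer, ← Set.Ioc_union_Ioi_eq_Ioi hT.le]
  refine (lintegral_union_le _ _ _).trans ((add_le_add (setLIntegral_mono' measurableSet_Ioc hlow)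
    (setLIntegral_mono' measurableSet_Ioi hhigh)).trans_eq ?_)
  rw [setLIntegral_const, Real.volume_Ioc, sub_zero, lintegral_const_mul _ (by fun_prop),
    setLIntegral_Ioi_ofReal_rpow (by linarith) hT, ← ENNReal.ofReal_mul (by positivity),
    ← ENNReal.ofReal_mul hA, ← ENNReal.ofReal_add (by positivity)
      (mul_nonneg hA (div_nonneg_of_nonpos (by simpa using by positivity) (by linarith))),
    mul_assoc A, ← Real.rpow_add_one hT.ne', neg_add_eq_sub]
  congr 1
  rw [show (-T ^ (1 - r) / (1 - r)) = T ^ (1 - r) / (r - 1) by rw [neg_div, ← div_neg, neg_sub]]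
  field_simp
  ring

theorem setLIntegral_rpow_le_of_meas_lt_le (hK : Measurable K) (hA : 0 ≤ A) {b : ℝ}
    (hb : 0 < b) (hrb : r < b)
    (hweak : ∀ t : ℝ, 0 < t → μ {x | ENNReal.ofReal t < K x} ≤ ENNReal.ofReal (A * t ^ (-r)))
    {T : ℝ} (hT : 0 < T) :
    ∫⁻ x in {x | K x ≤ ENNReal.ofReal T}, K x ^ b ∂μ ≤
      ENNReal.ofReal (A * b / (b - r) * T ^ (b - r)) := by
  have : MeasurableSet {x | K x ≤ ENNReal.ofReal T} := measurableSet_le hK measurable_const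
  have hbound : ∀ t ∈ Set.Ioi (0 : ℝ), (μ.restrict {x | K x ≤ ENNReal.ofReal T})
        {x | ENNReal.ofReal t < K x} * ENNReal.ofReal (t ^ (b - 1)) ≤
      (Set.Iio T).indicator (fun t => ENNReal.ofReal A * ENNReal.ofReal (t ^ (b - r - 1))) t := by
    intro t (ht : 0 < t)
    rw [Measure.restrict_apply (measurableSet_lt measurable_const hK)]
    rcases lt_or_ge t T with htT | htT
    · rw [Set.indicator_of_mem (Set.mem_Iio.2 htT), ← ENNReal.ofReal_mul hA,
        show A * t ^ (b - r - 1) = A * t ^ (-r) * t ^ (b - 1) by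
          rw [mul_assoc, ← Real.rpow_add ht]; ring_nf,
        ENNReal.ofReal_mul (by positivity)]
      gcongr
      exact (measure_mono Set.inter_subset_left).trans (hweak t ht)
    · have hempty : {x | ENNReal.ofReal t < K x} ∩ {x | K x ≤ ENNReal.ofReal T} = ∅ :=
        Set.eq_empty_of_forall_notMem fun x hx =>
          (hx.1.trans_le hx.2).not_ge (ENNReal.ofReal_le_ofReal htT)
      rw [hempty, measure_empty, zero_mul]
      exact zero_le
  rw [lintegral_rpow_eq_lintegral_meas_ofReal_lt hK hb]
  refine (mul_le_mul_right (setLIntegral_mono' measurableSet_Ioi hbound) _).trans_eq ?_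
  rw [setLIntegral_indicator measurableSet_Iio, Set.inter_comm, Set.Ioi_inter_Iio,
    lintegral_const_mul _ (by fun_prop), setLIntegral_Ioo_ofReal_rpow (by linarith) hT.le,
    ← ENNReal.ofReal_mul hA, ← ENNReal.ofReal_mul hb.le]
  ring_nf

end Truncation

theorem lconvolution_const_mul {G : Type*} [AddGroup G] [MeasurableSpace G] {μ : Measure G}
    {f g : G → ℝ≥0∞} {c : ℝ≥0∞} (hc : c ≠ ⊤) :
    (f ⋆ₗ[μ] fun x => c * g x) = fun x => c * (f ⋆ₗ[μ] g) x := funext fun x => by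
  simp_rw [lconvolution_def, mul_left_comm _ c]
  exact lintegral_const_mul' _ _ hc

theorem young_exponents {p q r b : ℝ} (hbq : b.HolderConjugate q) (hr : 0 < r) (hp : 0 < p)
    (hpqr : q⁻¹ + r⁻¹ = p⁻¹ + 1) :
    r < b ∧ p / r * (b - r) = b ∧ p / r * (1 - r) = 1 - p / q := by
  have hb := hbq.pos
  have hb_inv : b⁻¹ = r⁻¹ - p⁻¹ := by linarith [hbq.inv_add_inv_eq_one]
  refine ⟨(inv_lt_inv₀ hb hr).1 (by rw [hb_inv]; linarith [inv_pos.2 hp]), ?_, ?_⟩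
  · have : b * (p - r) = r * p := by field_simp at hb_inv; linarith
    field_simp
    linarith
  · have : p / q + p / r = 1 + p := by
      rw [div_eq_mul_inv, div_eq_mul_inv, ← mul_add, hpqr, mul_add, mul_inv_cancel₀ hp.ne', mul_one]
    rw [mul_one_sub, div_mul_cancel₀ _ hr.ne']
    linarith

section LConvolution

variable {G : Type*} [AddCommGroup G] [MeasurableSpace G] [MeasurableAdd₂ G] [MeasurableNeg G]
  {μ : Measure G}

theorem lintegral_lconvolution [SFinite μ] [μ.IsAddLeftInvariant] {f g : G → ℝ≥0∞}
    (hf : Measurable f) (hg : Measurable g) :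
    ∫⁻ x, (f ⋆ₗ[μ] g) x ∂μ = (∫⁻ x, f x ∂μ) * ∫⁻ x, g x ∂μ := by
  simp only [lconvolution_def]
  rw [lintegral_lintegral_swap (by fun_prop), ← lintegral_mul_const _ hf]
  refine lintegral_congr fun y => ?_
  rw [lintegral_const_mul _ (by fun_prop), lintegral_add_left_eq_self]

theorem lconvolution_le_rpow_mul_rpow [μ.IsAddLeftInvariant] [μ.IsNegInvariant] {f g : G → ℝ≥0∞}
    (hf : Measurable f) (hg : Measurable g) {b q : ℝ} (hbq : b.HolderConjugate q) (x : G) :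
    (f ⋆ₗ[μ] g) x ≤ (∫⁻ y, f y ^ b ∂μ) ^ (1 / b) * (∫⁻ y, g y ^ q ∂μ) ^ (1 / q) := by
  refine (ENNReal.lintegral_mul_le_Lp_mul_Lq μ hbq hf.aemeasurable (by fun_prop)).trans_eq ?_
  simp_rw [neg_add_eq_sub]
  rw [lintegral_sub_left_eq_self (fun y => g y ^ q) x]

theorem lconvolution_rpow_le {f g : G → ℝ≥0∞} (hf : Measurable f) (hg : Measurable g) {q : ℝ}
    (hq : 1 ≤ q) (x : G) :
    (f ⋆ₗ[μ] g) x ^ q ≤ (∫⁻ y, f y ∂μ) ^ (q - 1) * (f ⋆ₗ[μ] fun y => g y ^ q) x := by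
  have hq0 : 0 < q := by linarith
  have hq1 : 0 ≤ 1 - q⁻¹ := sub_nonneg.2 (inv_le_one_of_one_le₀ hq)
  have hsplit : ∀ y, f y ^ (1 - q⁻¹) * (f y * g (-y + x) ^ q) ^ q⁻¹ = f y * g (-y + x) := by
    intro y
    rw [ENNReal.mul_rpow_of_nonneg _ _ (by positivity), ENNReal.rpow_rpow_inv hq0.ne', ← mul_assoc,
      ← ENNReal.rpow_add_of_nonneg _ _ hq1 (by positivity), sub_add_cancel, ENNReal.rpow_one]
  have hHolder : (f ⋆ₗ[μ] g) x ≤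
      (∫⁻ y, f y ∂μ) ^ (1 - q⁻¹) * (f ⋆ₗ[μ] fun y => g y ^ q) x ^ q⁻¹ := by
    refine (lintegral_congr fun y => (hsplit y).symm).trans_le ?_
    exact ENNReal.lintegral_mul_norm_pow_le hf.aemeasurable (by fun_prop) hq1 (by positivity)
      (sub_add_cancel _ _)
  refine (ENNReal.rpow_le_rpow hHolder hq0.le).trans_eq ?_
  rw [ENNReal.mul_rpow_of_nonneg _ _ hq0.le, ENNReal.rpow_inv_rpow hq0.ne', ← ENNReal.rpow_mul,
    sub_mul, one_mul, inv_mul_cancel₀ hq0.ne']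

theorem eLpNorm_lconvolution_le [SFinite μ] [μ.IsAddLeftInvariant] {f g : G → ℝ≥0∞}
    (hf : Measurable f) (hg : Measurable g) {q : ℝ} (hq : 1 ≤ q) :
    eLpNorm (f ⋆ₗ[μ] g) (ENNReal.ofReal q) μ ≤
      (∫⁻ x, f x ∂μ) * eLpNorm g (ENNReal.ofReal q) μ := by
  have hq0 : 0 < q := by linarith
  have hint : ∫⁻ x, (f ⋆ₗ[μ] g) x ^ q ∂μ ≤ (∫⁻ x, f x ∂μ) ^ q * ∫⁻ x, g x ^ q ∂μ := by
    refine (lintegral_mono (lconvolution_rpow_le hf hg hq)).trans_eq ?_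
    rw [lintegral_const_mul _ (measurable_lconvolution μ hf (by fun_prop)),
      lintegral_lconvolution hf (by fun_prop), ← mul_assoc]
    congr 1
    nth_rw 2 [← ENNReal.rpow_one (∫⁻ x, f x ∂μ)]
    rw [← ENNReal.rpow_add_of_nonneg _ _ (by linarith) zero_le_one, sub_add_cancel]
  simp only [eLpNorm_eq_lintegral_rpow_enorm_toReal (ENNReal.ofReal_pos.2 hq0).ne'
    ENNReal.ofReal_ne_top, enorm_eq_self, ENNReal.toReal_ofReal hq0.le]
  refine (ENNReal.rpow_le_rpow hint (by positivity)).trans_eq ?_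
  rw [ENNReal.mul_rpow_of_nonneg _ _ (by positivity), ← ENNReal.rpow_mul,
    mul_one_div_cancel hq0.ne', ENNReal.rpow_one]

theorem lconvolution_le_truncation {K u : G → ℝ≥0∞} (hK : Measurable K) (hu : Measurable u)
    (T a : ℝ≥0∞) (x : G) :
    (K ⋆ₗ[μ] u) x ≤ ({y | K y ≤ T}.indicator K ⋆ₗ[μ] u) x + a * (∫⁻ y in {y | T < K y}, K y ∂μ) +
      ({y | T < K y}.indicator K ⋆ₗ[μ] {y | a < u y}.indicator u) x := by
  set Klow := {y | K y ≤ T}.indicator K with hKlow_def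
  set Khigh := {y | T < K y}.indicator K with hKhigh_def
  have hKlow : Measurable Klow := hK.indicator (measurableSet_le hK measurable_const)
  have hKhigh : Measurable Khigh := hK.indicator (measurableSet_lt measurable_const hK)
  have hpt : ∀ y, K y * u (-y + x) ≤ Klow y * u (-y + x) + a * Khigh y +
      Khigh y * {y | a < u y}.indicator u (-y + x) := by
    intro y
    rcases le_or_gt (K y) T with hy | hy
    · simp [hKlow_def, hKhigh_def, hy, hy.not_gt]
    · rcases le_or_gt (u (-y + x)) a with hux | hux
      · simpa [hKlow_def, hKhigh_def, hy, hy.not_ge, hux.not_gt, mul_comm a] using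
          mul_le_mul_right hux (K y)
      · simp [hKlow_def, hKhigh_def, hy, hy.not_ge, hux]
  refine (lintegral_mono hpt).trans_eq ?_
  rw [lintegral_add_left (by fun_prop), lintegral_add_left (by fun_prop),
    lintegral_const_mul _ hKhigh, lintegral_indicator (measurableSet_lt measurable_const hK)]
  rfl

variable [μ.IsAddLeftInvariant] [μ.IsNegInvariant]

theorem lconvolution_le_mul_add_mul {K u : G → ℝ≥0∞} (hK : Measurable K)
    (hu : Measurable u) (T : ℝ≥0∞) {a : ℝ≥0∞} (ha : ∀ y, u y ≤ a) (x : G) :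
    (K ⋆ₗ[μ] u) x ≤ T * (∫⁻ y, u y ∂μ) + a * ∫⁻ y in {y | T < K y}, K y ∂μ := by
  refine (lconvolution_le_truncation hK hu T a x).trans ?_
  have hempty : {y | a < u y} = ∅ := Set.eq_empty_of_forall_notMem fun y hy => (ha y).not_gt hy
  have hlow : ({y | K y ≤ T}.indicator K ⋆ₗ[μ] u) x ≤ T * ∫⁻ y, u y ∂μ := by
    rw [lconvolution_def, ← lintegral_sub_left_eq_self u x,
      ← lintegral_const_mul _ (by fun_prop)]
    refine lintegral_mono fun y => ?_
    rw [neg_add_eq_sub]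
    gcongr
    exact Set.indicator_le' (fun _ hy => hy) (fun _ _ => zero_le) y
  rw [hempty, Set.indicator_empty', lconvolution_zero, Pi.zero_apply, add_zero]
  gcongr

theorem lconvolution_le_add_lconvolution_indicator {K u : G → ℝ≥0∞} (hK : Measurable K)
    (hu : Measurable u) {b q : ℝ} (hbq : b.HolderConjugate q) (hu1 : ∫⁻ x, u x ^ q ∂μ ≤ 1)
    {T a M c : ℝ} (ha : 0 ≤ a) (hc : 0 < c)
    (hlow : ∫⁻ x in {x | K x ≤ ENNReal.ofReal T}, K x ^ b ∂μ ≤ ENNReal.ofReal (c ^ b))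
    (hhigh : ∫⁻ x in {x | ENNReal.ofReal T < K x}, K x ∂μ ≤ ENNReal.ofReal M) (x : G) :
    (K ⋆ₗ[μ] u) x ≤ ENNReal.ofReal c + ENNReal.ofReal (a * M) +
      ({x | ENNReal.ofReal T < K x}.indicator K ⋆ₗ[μ]
        {x | ENNReal.ofReal a < u x}.indicator u) x := by
  have hset : MeasurableSet {x | K x ≤ ENNReal.ofReal T} := measurableSet_le hK measurable_const
  have hlow' : ∫⁻ x, {x | K x ≤ ENNReal.ofReal T}.indicator K x ^ b ∂μ ≤
      ENNReal.ofReal (c ^ b) := by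
    refine le_of_eq_of_le ?_ hlow
    rw [← lintegral_indicator hset]
    refine lintegral_congr fun x => ?_
    simp only [Set.indicator_apply, apply_ite (· ^ b), ENNReal.zero_rpow_of_pos hbq.pos]
  have hfar : ({x | K x ≤ ENNReal.ofReal T}.indicator K ⋆ₗ[μ] u) x ≤ ENNReal.ofReal c := calc
    _ ≤ (∫⁻ y, {x | K x ≤ ENNReal.ofReal T}.indicator K y ^ b ∂μ) ^ (1 / b) *
        (∫⁻ y, u y ^ q ∂μ) ^ (1 / q) :=
      lconvolution_le_rpow_mul_rpow (hK.indicator hset) hu hbq x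
    _ ≤ ENNReal.ofReal (c ^ b) ^ (1 / b) * 1 := by
      have := hbq.nonneg
      have := hbq.symm.nonneg
      gcongr
      exact ENNReal.rpow_le_one hu1 (by positivity)
    _ = ENNReal.ofReal c := by
      rw [mul_one, ← ENNReal.ofReal_rpow_of_pos hc, one_div, ENNReal.rpow_rpow_inv hbq.ne_zero]
  refine (lconvolution_le_truncation hK hu (ENNReal.ofReal T) (ENNReal.ofReal a) x).trans ?_
  rw [ENNReal.ofReal_mul ha]
  gcongr

variable [SFinite μ]

theorem meas_lt_lconvolution_le_of_truncation {K u : G → ℝ≥0∞} (hK : Measurable K)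
    (hu : Measurable u) {b q : ℝ} (hbq : b.HolderConjugate q) (hu1 : ∫⁻ x, u x ^ q ∂μ ≤ 1)
    {T a M t : ℝ} (ha : 0 ≤ a) (ht : 0 < t)
    (hlow : ∫⁻ x in {x | K x ≤ ENNReal.ofReal T}, K x ^ b ∂μ ≤ ENNReal.ofReal ((t / 4) ^ b))
    (hhigh : ∫⁻ x in {x | ENNReal.ofReal T < K x}, K x ∂μ ≤ ENNReal.ofReal M)
    (haM : a * M ≤ t / 4) :
    μ {x | ENNReal.ofReal t < (K ⋆ₗ[μ] u) x} ≤
      ENNReal.ofReal (2 * M / t) * ∫⁻ x in {x | ENNReal.ofReal a < u x}, u x ∂μ := by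
  set Khigh := {x | ENNReal.ofReal T < K x}.indicator K
  set uhigh := {x | ENNReal.ofReal a < u x}.indicator u
  have hKset : MeasurableSet {x | ENNReal.ofReal T < K x} := measurableSet_lt measurable_const hK
  have huset : MeasurableSet {x | ENNReal.ofReal a < u x} := measurableSet_lt measurable_const hu
  have hsub : {x | ENNReal.ofReal t < (K ⋆ₗ[μ] u) x} ⊆
      {x | ENNReal.ofReal (t / 2) ≤ (Khigh ⋆ₗ[μ] uhigh) x} := by
    intro x hx
    have hsum := (le_of_lt hx : ENNReal.ofReal t ≤ _).trans
      ((lconvolution_le_add_lconvolution_indicator hK hu hbq hu1 ha (by positivity) hlow hhigh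
        x).trans (add_le_add_left (add_le_add_right (ENNReal.ofReal_le_ofReal haM) _) _))
    have hsplit : ENNReal.ofReal t =
        ENNReal.ofReal (t / 4) + ENNReal.ofReal (t / 4) + ENNReal.ofReal (t / 2) := by
      rw [← ENNReal.ofReal_add (by positivity) (by positivity),
        ← ENNReal.ofReal_add (by positivity) (by positivity)]
      ring_nf
    exact (ENNReal.add_le_add_iff_left (by finiteness)).1 (hsplit ▸ hsum)
  calc μ {x | ENNReal.ofReal t < (K ⋆ₗ[μ] u) x}
      ≤ (∫⁻ x, (Khigh ⋆ₗ[μ] uhigh) x ∂μ) / ENNReal.ofReal (t / 2) :=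
        (measure_mono hsub).trans (meas_ge_le_lintegral_div
          (measurable_lconvolution μ (hK.indicator hKset) (hu.indicator huset)).aemeasurable
          (by simpa using ht) ENNReal.ofReal_ne_top)
    _ ≤ (ENNReal.ofReal M * ∫⁻ x in {x | ENNReal.ofReal a < u x}, u x ∂μ) /
        ENNReal.ofReal (t / 2) := by
      rw [lintegral_lconvolution (hK.indicator hKset) (hu.indicator huset),
        lintegral_indicator hKset, lintegral_indicator huset]
      gcongr
    _ = _ := by
      rw [mul_comm, mul_div_assoc, ← ENNReal.ofReal_div_of_pos (by positivity), mul_comm]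
      congr 2
      field_simp

section WeakType

variable {K : G → ℝ≥0∞} {A r p q : ℝ}

theorem exists_meas_lt_lconvolution_le (hK : Measurable K) (hA : 0 < A) (hr : 1 < r) (hq : 1 < q)
    (hp : 0 < p) (hpqr : q⁻¹ + r⁻¹ = p⁻¹ + 1)
    (hweak : ∀ t : ℝ, 0 < t → μ {x | ENNReal.ofReal t < K x} ≤ ENNReal.ofReal (A * t ^ (-r))) :
    ∃ B : ℝ, 0 < B ∧ ∀ u : G → ℝ≥0∞, Measurable u → ∫⁻ x, u x ^ q ∂μ ≤ 1 → ∀ t : ℝ, 0 < t →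
      μ {x | ENNReal.ofReal t < (K ⋆ₗ[μ] u) x} ≤ ENNReal.ofReal (B * t ^ (-(p / q))) *
        ∫⁻ x in {x | ENNReal.ofReal (t ^ (p / q) / B) < u x}, u x ∂μ := by
  set b : ℝ := q.conjExponent
  have hbq : b.HolderConjugate q := (Real.HolderConjugate.conjExponent hq).symm
  have hb : 0 < b := hbq.pos
  have hr0 : 0 < r := by linarith
  have : 0 < r - 1 := by linarith
  obtain ⟨hrb, hexp_T, hexp_M⟩ := young_exponents hbq hr0 hp hpqr
  have hbr : 0 < b - r := sub_pos.2 hrb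
  set c : ℝ := A * b / (b - r)
  have hc : 0 < c := by positivity
  set D : ℝ := (4 ^ b * c) ^ (-(b - r)⁻¹)
  have hD : D ^ (b - r) = (4 ^ b * c)⁻¹ := by
    rw [← Real.rpow_mul (by positivity), neg_mul, inv_mul_cancel₀ hbr.ne', Real.rpow_neg_one]
  set E : ℝ := A * r / (r - 1) * D ^ (1 - r)
  have hE : 0 < E := by positivity
  refine ⟨4 * E, by positivity, fun u hu hu1 t ht => ?_⟩
  have hT : 0 < D * t ^ (p / r) := by positivity
  have hlow : c * (D * t ^ (p / r)) ^ (b - r) = (t / 4) ^ b := by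
    rw [Real.mul_rpow (by positivity) (by positivity), hD, ← Real.rpow_mul ht.le, hexp_T,
      Real.div_rpow ht.le (by norm_num)]
    field_simp
  have hhigh : A * r / (r - 1) * (D * t ^ (p / r)) ^ (1 - r) = E * (t * (t ^ (p / q))⁻¹) := by
    rw [Real.mul_rpow (by positivity) (by positivity), ← Real.rpow_mul ht.le, hexp_M,
      Real.rpow_sub ht, Real.rpow_one]
    ring
  refine (meas_lt_lconvolution_le_of_truncation (a := t ^ (p / q) / (4 * E)) hK hu hbq hu1
    (by positivity) ht
    ((setLIntegral_rpow_le_of_meas_lt_le hK hA.le hb hrb hweak hT).trans_eq (by rw [hlow]))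
    ((setLIntegral_lt_le_of_meas_lt_le hK hA.le hr hweak hT).trans_eq (by rw [hhigh]))
    (le_of_eq (by field_simp))).trans ?_
  gcongr
  rw [Real.rpow_neg ht.le]
  field_simp
  norm_num

theorem exists_eLpNorm_lconvolution_le (hK : Measurable K) (hA : 0 < A) (hr : 1 < r) (hq : 1 < q)
    (hp : 0 < p) (hpqr : q⁻¹ + r⁻¹ = p⁻¹ + 1)
    (hweak : ∀ t : ℝ, 0 < t → μ {x | ENNReal.ofReal t < K x} ≤ ENNReal.ofReal (A * t ^ (-r))) :
    ∃ C : ℝ, 0 < C ∧ ∀ u : G → ℝ≥0∞, Measurable u →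
      eLpNorm (K ⋆ₗ[μ] u) (ENNReal.ofReal p) μ ≤
        ENNReal.ofReal C * eLpNorm u (ENNReal.ofReal q) μ := by
  have hq0 : 0 < q := by linarith
  have : 0 < q - 1 := by linarith
  obtain ⟨B, hB, hlevel⟩ := exists_meas_lt_lconvolution_le hK hA hr hq hp hpqr hweak
  refine ⟨(B ^ q * (q / (q - 1))) ^ (1 / p), by positivity, fun u hu => ?_⟩
  simp only [eLpNorm_eq_lintegral_rpow_enorm_toReal (ENNReal.ofReal_pos.2 hp).ne'
    ENNReal.ofReal_ne_top, eLpNorm_eq_lintegral_rpow_enorm_toReal (ENNReal.ofReal_pos.2 hq0).ne'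
    ENNReal.ofReal_ne_top, enorm_eq_self, ENNReal.toReal_ofReal hp.le, ENNReal.toReal_ofReal hq0.le]
  have hC : ENNReal.ofReal ((B ^ q * (q / (q - 1))) ^ (1 / p)) ≠ 0 :=
    (ENNReal.ofReal_pos.2 (by positivity)).ne'
  rw [mul_comm, ← ENNReal.div_le_iff hC ENNReal.ofReal_ne_top]
  refine le_of_forall_gt_imp_ge_of_dense fun N hN => ?_
  rcases eq_or_ne N ⊤ with rfl | hN_top
  · exact le_top
  have hN0 : N ≠ 0 := (zero_le.trans_lt hN).ne'
  rw [ENNReal.div_le_iff hC ENNReal.ofReal_ne_top]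
  have hu_le : ∫⁻ x, (N⁻¹ * u x) ^ q ∂μ ≤ 1 := by
    rw [lintegral_inv_mul_rpow hq0 hN0]
    exact ENNReal.div_le_of_le_mul
      (by simpa using (ENNReal.rpow_inv_le_iff hq0).1 (by simpa using hN.le))
  have hstrong := lintegral_rpow_le_of_meas_lt_le (v := K ⋆ₗ[μ] fun x => N⁻¹ * u x) (by fun_prop)
    (measurable_lconvolution μ hK (by fun_prop)) hp hq hB (hlevel _ (by fun_prop) hu_le)
  rw [lconvolution_const_mul (by simp [hN0]), lintegral_inv_mul_rpow hp hN0,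
    ENNReal.div_le_iff (by simp [hN0, hN_top]) (by simp [hN0, hN_top])] at hstrong
  calc (∫⁻ x, (K ⋆ₗ[μ] u) x ^ p ∂μ) ^ (1 / p)
      ≤ (ENNReal.ofReal (B ^ q * (q / (q - 1))) * 1 * N ^ p) ^ (1 / p) := by
        refine ENNReal.rpow_le_rpow (hstrong.trans ?_) (by positivity)
        gcongr
    _ = N * ENNReal.ofReal ((B ^ q * (q / (q - 1))) ^ (1 / p)) := by
        rw [mul_one, ENNReal.mul_rpow_of_nonneg _ _ (by positivity), one_div,
          ENNReal.rpow_rpow_inv hp.ne',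
          ENNReal.ofReal_rpow_of_nonneg (by positivity) (by positivity), mul_comm]

end WeakType

end LConvolution

theorem volume_ofReal_lt_enorm_inv_le {t : ℝ} (ht : 0 < t) :
    volume {z : ℂ | ENNReal.ofReal t < ‖z‖ₑ⁻¹} ≤ ENNReal.ofReal (Real.pi * t ^ (-2 : ℝ)) := by
  have hsub : {z : ℂ | ENNReal.ofReal t < ‖z‖ₑ⁻¹} ⊆ Metric.ball 0 t⁻¹ := by
    intro z (hz : ENNReal.ofReal t < ‖z‖ₑ⁻¹)
    rwa [ENNReal.lt_inv_iff_lt_inv, ← ENNReal.ofReal_inv_of_pos ht, ← ofReal_norm,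
      ENNReal.ofReal_lt_ofReal_iff (inv_pos.2 ht), ← mem_ball_zero_iff] at hz
  refine (measure_mono hsub).trans_eq ?_
  rw [Complex.volume_ball, mul_comm, ENNReal.ofReal_mul Real.pi_pos.le, Real.rpow_neg ht.le,
    ← Real.inv_rpow ht.le, Real.rpow_two, ENNReal.ofReal_pow (inv_pos.2 ht).le,
    ← NNReal.coe_real_pi, ENNReal.ofReal_coe_nnreal]

theorem exists_eLpNorm_enorm_inv_lconvolution_le {p : ℝ} (hp : 2 < p) :
    ∃ C : ℝ, 0 < C ∧ ∀ u : ℂ → ℝ≥0∞, Measurable u →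
      eLpNorm ((fun z : ℂ => ‖z‖ₑ⁻¹) ⋆ₗ[volume] u) (ENNReal.ofReal p) volume ≤
        ENNReal.ofReal C * eLpNorm u (ENNReal.ofReal (2 * p / (p + 2))) volume := by
  refine exists_eLpNorm_lconvolution_le (by fun_prop) Real.pi_pos one_lt_two ?_ (by linarith) ?_
    fun t ht => volume_ofReal_lt_enorm_inv_le ht
  · rw [one_lt_div (by linarith)]
    linarith
  · field_simp
    ring

theorem lintegral_enorm_div_sub_le (h : ℂ → ℂ) (z : ℂ) :
    ∫⁻ w, ‖h w / (z - w)‖ₑ ≤ ((fun z : ℂ => ‖z‖ₑ⁻¹) ⋆ₗ[volume] fun w => ‖h w‖ₑ) z := by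
  rw [lconvolution_comm, lconvolution_def]
  refine lintegral_mono fun w => ?_
  rw [div_eq_mul_inv, enorm_mul, neg_add_eq_sub]
  gcongr
  rcases eq_or_ne (z - w) 0 with hzw | hzw
  · simp [hzw]
  · rw [enorm_inv hzw]

theorem enorm_dbarInv_le (h : ℂ → ℂ) (z : ℂ) :
    ‖dbarInv h z‖ₑ ≤ ((fun z : ℂ => ‖z‖ₑ⁻¹) ⋆ₗ[volume] fun w => ‖h w‖ₑ) z := by
  have hpi : ‖(Real.pi : ℂ)⁻¹‖ₑ ≤ 1 := by
    rw [← ofReal_norm, norm_inv, Complex.norm_real, Real.norm_of_nonneg Real.pi_pos.le]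
    exact ENNReal.ofReal_le_one.2 (inv_le_one_of_one_le₀ (by linarith [Real.pi_gt_three]))
  rw [dbarInv, enorm_mul]
  exact (mul_le_of_le_one_left' hpi).trans
    ((enorm_integral_le_lintegral_enorm _).trans (lintegral_enorm_div_sub_le h z))

theorem stronglyMeasurable_dbarInv {h : ℂ → ℂ} (hh : StronglyMeasurable h) :
    StronglyMeasurable (dbarInv h) := by
  have hm : Measurable (Function.uncurry fun z w : ℂ => h w / (z - w)) :=
    (hh.measurable.comp measurable_snd).div (measurable_fst.sub measurable_snd)
  exact hm.stronglyMeasurable.integral_prod_right.const_mul _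

theorem exists_eLpNorm_dbarInv_le {p : ℝ} (hp : 2 < p) :
    ∃ C : ℝ, 0 < C ∧ ∀ h : ℂ → ℂ, Measurable h →
      eLpNorm (dbarInv h) (ENNReal.ofReal p) volume ≤
        ENNReal.ofReal C * eLpNorm h (ENNReal.ofReal (2 * p / (p + 2))) volume := by
  obtain ⟨C, hC, hHLS⟩ := exists_eLpNorm_enorm_inv_lconvolution_le hp
  refine ⟨C, hC, fun h hh => ?_⟩
  rw [← eLpNorm_enorm h]
  exact (eLpNorm_mono_enorm (enorm_dbarInv_le h)).trans (hHLS _ hh.enorm)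

theorem enorm_inv_lconvolution_lt_top {u : ℂ → ℝ≥0∞} (hu : Measurable u) (hint : ∫⁻ w, u w ≠ ⊤)
    {M : ℝ≥0∞} (hM : M ≠ ⊤) (hbdd : ∀ w, u w ≤ M) (z : ℂ) :
    ((fun z : ℂ => ‖z‖ₑ⁻¹) ⋆ₗ[volume] u) z < ⊤ := by
  refine (lconvolution_le_mul_add_mul (by fun_prop) hu (ENNReal.ofReal 1) hbdd z).trans_lt ?_
  have hnear := setLIntegral_lt_le_of_meas_lt_le (K := fun z : ℂ => ‖z‖ₑ⁻¹) (by fun_prop)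
    Real.pi_pos.le one_lt_two (fun t ht => volume_ofReal_lt_enorm_inv_le ht) one_pos
  exact ENNReal.add_lt_top.2 ⟨ENNReal.mul_lt_top ENNReal.ofReal_lt_top hint.lt_top,
    ENNReal.mul_lt_top hM.lt_top (hnear.trans_lt ENNReal.ofReal_lt_top)⟩

theorem integrable_div_sub {h : ℂ → ℂ} (hh : Measurable h) (hint : Integrable h) {M : ℝ}
    (hM : ∀ w, ‖h w‖ ≤ M) (z : ℂ) : Integrable fun w => h w / (z - w) := by
  refine ⟨(by fun_prop : Measurable _).aestronglyMeasurable,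
    (lintegral_enorm_div_sub_le h z).trans_lt ?_⟩
  exact enorm_inv_lconvolution_lt_top hh.enorm hint.2.ne ENNReal.ofReal_ne_top
    (fun w => (ofReal_norm (h w)).symm.trans_le (ENNReal.ofReal_le_ofReal (hM w))) z

theorem polarCoord_symm_eq_mul_exp (p : ℝ × ℝ) :
    Complex.polarCoord.symm p = p.1 * exp (p.2 * I) := by
  rw [Complex.polarCoord_symm_apply, exp_mul_I, ofReal_cos, ofReal_sin]

theorem integrableOn_polarCoord_target_smul {E : Type*} [NormedAddCommGroup E] [NormedSpace ℝ E]
    {f : ℂ → E} (hf : Integrable f) :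
    IntegrableOn (fun p : ℝ × ℝ => p.1 • f (Complex.polarCoord.symm p)) polarCoord.target := by
  have hprod : Integrable (f ∘ measurableEquivRealProd.symm) :=
    (Complex.volume_preserving_equiv_real_prod.symm.integrable_comp_emb
      measurableEquivRealProd.symm.measurableEmbedding).2 hf
  have hpolar := (integrableOn_image_iff_integrableOn_abs_det_fderiv_smul volume
    polarCoord.open_target.measurableSet
    (fun p _ => (hasFDerivAt_polarCoord_symm p).hasFDerivWithinAt)
    polarCoord.symm.injOn _).1 hprod.integrableOn
  refine hpolar.congr_fun (fun p hp => ?_) polarCoord.open_target.measurableSet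
  simp only [det_fderivPolarCoordSymm, abs_of_pos (show 0 < p.1 from hp.1), Function.comp_apply,
    measurableEquivRealProd_symm_polarCoord_symm_apply]

section CauchyPompeiu

variable {g : ℂ → ℂ} {z : ℂ}

theorem hasDerivAt_comp_add_mul_exp_fst (hg : Differentiable ℝ g) (z : ℂ) (r θ : ℝ) :
    HasDerivAt (fun r : ℝ => g (z + r * exp (θ * I)))
      (fderiv ℝ g (z + r * exp (θ * I)) (exp (θ * I))) r := by
  have hpath : HasDerivAt (fun r : ℝ => z + r * exp (θ * I)) (exp (θ * I)) r := by
    simpa using ((hasDerivAt_id r).ofReal_comp.mul_const (exp (θ * I))).const_add z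
  exact (hg _).hasFDerivAt.comp_hasDerivAt r hpath

theorem hasDerivAt_comp_add_mul_exp_snd (hg : Differentiable ℝ g) (z : ℂ) (r θ : ℝ) :
    HasDerivAt (fun θ : ℝ => g (z + r * exp (θ * I)))
      (r * fderiv ℝ g (z + r * exp (θ * I)) (I * exp (θ * I))) θ := by
  have hpath : HasDerivAt (fun θ : ℝ => z + r * exp (θ * I)) (r • (I * exp (θ * I))) θ := by
    have := (((hasDerivAt_id θ).ofReal_comp.mul_const I).cexp.const_mul (r : ℂ)).const_add z
    simpa [mul_comm, mul_left_comm] using this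
  have hcomp := (hg _).hasFDerivAt.comp_hasDerivAt θ hpath
  rwa [map_smul, real_smul] at hcomp

theorem exp_neg_mul_dbar_eq (g : ℂ → ℂ) (z : ℂ) (θ : ℝ) :
    exp (-(θ * I)) * dbar g z =
      (fderiv ℝ g z (exp (θ * I)) + I * fderiv ℝ g z (I * exp (θ * I))) / 2 := by
  have hexp : exp (θ * I) = Real.cos θ • (1 : ℂ) + Real.sin θ • I := by
    rw [exp_mul_I]; simp
  have hI_exp : I * exp (θ * I) = Real.cos θ • I - Real.sin θ • (1 : ℂ) := by
    rw [hexp, real_smul, real_smul, real_smul, real_smul]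
    linear_combination (Real.sin θ : ℂ) * I_sq
  have hexp_neg : exp (-(θ * I)) = Real.cos θ - Real.sin θ * I := by
    rw [← neg_mul, exp_mul_I]; simp [sub_eq_add_neg]
  rw [hI_exp, hexp, hexp_neg, map_add, map_sub, map_smul, map_smul, map_smul, map_smul]
  simp only [real_smul, dbar]
  linear_combination (-(Real.sin θ : ℂ) * fderiv ℝ g z I / 2) * I_sq

theorem integrableOn_norm_fderiv_polarCoord
    (hint : Integrable fun w => ‖fderiv ℝ g w‖ / ‖z - w‖) :
    IntegrableOn (fun p : ℝ × ℝ => ‖fderiv ℝ g (z + p.1 * exp (p.2 * I))‖) polarCoord.target := by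
  refine (integrableOn_polarCoord_target_smul (hint.comp_add_left z)).congr_fun
    (fun p hp => ?_) polarCoord.open_target.measurableSet
  have hp0 : 0 < p.1 := hp.1
  simp only [polarCoord_symm_eq_mul_exp, sub_add_cancel_left, norm_neg, norm_mul, norm_real,
    norm_exp_ofReal_mul_I, Real.norm_of_nonneg hp0.le, smul_eq_mul]
  field_simp

theorem integrableOn_fderiv_apply_polarCoord (hg : ContDiff ℝ 1 g)
    (hint : Integrable fun w => ‖fderiv ℝ g w‖ / ‖z - w‖) {v : ℝ → ℂ} (hv : Continuous v)
    (hv_norm : ∀ θ, ‖v θ‖ = 1) :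
    IntegrableOn (fun p : ℝ × ℝ => fderiv ℝ g (z + p.1 * exp (p.2 * I)) (v p.2))
      polarCoord.target := by
  have : Continuous (fderiv ℝ g) := hg.continuous_fderiv one_ne_zero
  refine (integrableOn_norm_fderiv_polarCoord hint).mono' (Continuous.aestronglyMeasurable
    (by fun_prop)) (ae_of_all _ fun p => ?_)
  simpa [hv_norm] using (fderiv ℝ g (z + p.1 * exp (p.2 * I))).le_opNorm (v p.2)

theorem setIntegral_polarCoord_radial (hg : ContDiff ℝ 1 g)
    (hlim : Tendsto g (cocompact ℂ) (𝓝 0))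
    (hint : Integrable fun w => ‖fderiv ℝ g w‖ / ‖z - w‖) :
    ∫ p in polarCoord.target, fderiv ℝ g (z + p.1 * exp (p.2 * I)) (exp (p.2 * I)) =
      -(2 * Real.pi * g z) := by
  have hprod := integrableOn_fderiv_apply_polarCoord hg hint (v := fun θ => exp (θ * I))
    (by fun_prop) norm_exp_ofReal_mul_I
  rw [polarCoord_target, IntegrableOn, Measure.volume_eq_prod, ← Measure.prod_restrict] at hprod
  rw [polarCoord_target, Measure.volume_eq_prod, ← Measure.prod_restrict,
    integral_prod_symm _ hprod]
  have hray : ∀ θ : ℝ, Tendsto (fun r : ℝ => z + r * exp (θ * I)) atTop (cocompact ℂ) := by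
    intro θ
    have hzero : Tendsto (fun r : ℝ => r * exp (θ * I)) atTop (cocompact ℂ) := by
      rw [← Metric.cobounded_eq_cocompact, ← tendsto_norm_atTop_iff_cobounded]
      simpa using tendsto_abs_atTop_atTop
    exact (Homeomorph.addLeft z).isClosedEmbedding.tendsto_cocompact.comp hzero
  have hradial : ∀ᵐ θ : ℝ ∂volume.restrict (Set.Ioo (-Real.pi) Real.pi),
      ∫ r in Set.Ioi (0 : ℝ), fderiv ℝ g (z + r * exp (θ * I)) (exp (θ * I)) = -g z := by
    filter_upwards [hprod.prod_left_ae] with θ hθ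
    rw [integral_Ioi_of_hasDerivAt_of_tendsto'
      (fun r _ => hasDerivAt_comp_add_mul_exp_fst (hg.differentiable one_ne_zero) z r θ) hθ
      (hlim.comp (hray θ))]
    simp
  rw [integral_congr_ae hradial, setIntegral_const, Measure.real, Real.volume_Ioo,
    ENNReal.toReal_ofReal (by linarith [Real.pi_pos]), real_smul]
  push_cast
  ring

theorem setIntegral_polarCoord_angular (hg : ContDiff ℝ 1 g)
    (hint : Integrable fun w => ‖fderiv ℝ g w‖ / ‖z - w‖) :
    ∫ p in polarCoord.target, fderiv ℝ g (z + p.1 * exp (p.2 * I)) (I * exp (p.2 * I)) = 0 := by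
  have hprod := integrableOn_fderiv_apply_polarCoord hg hint (v := fun θ => I * exp (θ * I))
    (by fun_prop) (by simp)
  have : Continuous (fderiv ℝ g) := hg.continuous_fderiv one_ne_zero
  rw [polarCoord_target, Measure.volume_eq_prod, setIntegral_prod _ hprod]
  refine setIntegral_eq_zero_of_forall_eq_zero fun r (hr : 0 < r) => ?_
  rw [← integral_Ioc_eq_integral_Ioo,
    ← intervalIntegral.integral_of_le (by linarith [Real.pi_pos])]
  have hftc := intervalIntegral.integral_eq_sub_of_hasDerivAt
    (fun θ _ => hasDerivAt_comp_add_mul_exp_snd (hg.differentiable one_ne_zero) z r θ)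
    (Continuous.intervalIntegrable (by fun_prop) (-Real.pi) Real.pi)
  rw [intervalIntegral.integral_const_mul] at hftc
  refine (mul_eq_zero.1 (hftc.trans ?_)).resolve_left (ofReal_ne_zero.2 hr.ne')
  simp [exp_neg]

theorem dbarInv_dbar (hg : ContDiff ℝ 1 g) (hlim : Tendsto g (cocompact ℂ) (𝓝 0))
    (hint : Integrable fun w => ‖fderiv ℝ g w‖ / ‖z - w‖) : dbarInv (dbar g) z = g z := by
  have hpolar : ∀ p ∈ polarCoord.target,
      p.1 • (dbar g (z + Complex.polarCoord.symm p) / (z - (z + Complex.polarCoord.symm p))) =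
        -(1 / 2) * (fderiv ℝ g (z + p.1 * exp (p.2 * I)) (exp (p.2 * I)) +
          I * fderiv ℝ g (z + p.1 * exp (p.2 * I)) (I * exp (p.2 * I))) := by
    intro p hp
    have hp0 : (p.1 : ℂ) ≠ 0 := ofReal_ne_zero.2 (ne_of_gt hp.1)
    have hexp := exp_neg_mul_dbar_eq g (z + p.1 * exp (p.2 * I)) p.2
    rw [polarCoord_symm_eq_mul_exp, real_smul, sub_add_cancel_left]
    rw [exp_neg] at hexp
    have := exp_ne_zero (p.2 * I)
    field_simp at hexp ⊢
    linear_combination -hexp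
  rw [dbarInv, ← integral_add_left_eq_self _ z, ← Complex.integral_comp_polarCoord_symm,
    setIntegral_congr_fun polarCoord.open_target.measurableSet hpolar, integral_const_mul,
    integral_add (integrableOn_fderiv_apply_polarCoord hg hint (v := fun θ => exp (θ * I))
      (by fun_prop) norm_exp_ofReal_mul_I) ((integrableOn_fderiv_apply_polarCoord hg hint
        (v := fun θ => I * exp (θ * I)) (by fun_prop) (by simp)).const_mul I),
    integral_const_mul, setIntegral_polarCoord_radial hg hlim hint,
    setIntegral_polarCoord_angular hg hint]
  have := Real.pi_ne_zero
  field_simp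
  ring

end CauchyPompeiu

theorem hasTemperateGrowth_cexp_const_mul {E : Type*} [NormedAddCommGroup E] [NormedSpace ℝ E]
    {f : E → ℝ} (hf : f.HasTemperateGrowth) {c : ℂ} {t : Set ℝ} (ht : UniqueDiffOn ℝ t)
    (hft : Set.range f ⊆ t) (hc : ∀ x ∈ t, c.re * x ≤ 0) :
    (fun x => cexp (c * f x)).HasTemperateGrowth := by
  have hderiv : ∀ n : ℕ, iteratedDeriv n (fun x : ℝ => cexp (c * x)) =
      fun x : ℝ => c ^ n * cexp (c * x) := by
    intro n
    induction n with
    | zero => simp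
    | succ n ih =>
      rw [iteratedDeriv_succ, ih]
      funext x
      have hexp : HasDerivAt (fun x : ℝ => cexp (c * x)) (cexp (c * x) * (c * 1)) x :=
        (ofRealCLM.hasDerivAt.const_mul c).cexp
      rw [(hexp.const_mul (c ^ n)).deriv, pow_succ]
      ring
  have hexp : ContDiff ℝ ⊤ fun x : ℝ => cexp (c * x) :=
    (contDiff_const.mul ofRealCLM.contDiff).cexp
  refine Function.HasTemperateGrowth.comp' (g := fun x : ℝ => cexp (c * x)) hft ht
    (hexp.of_le le_top).contDiffOn (fun N => ⟨0, ∑ n ∈ Finset.range (N + 1), ‖c‖ ^ n,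
      Finset.sum_nonneg fun _ _ => by positivity, fun n hn x hx => ?_⟩) hf
  rw [norm_iteratedFDerivWithin_eq_norm_iteratedDerivWithin,
    iteratedDerivWithin_eq_iteratedDeriv ht (hexp.contDiffAt.of_le le_top) hx, hderiv, norm_mul,
    norm_pow, norm_exp, re_mul_ofReal, pow_zero, mul_one]
  refine (mul_le_of_le_one_right (by positivity) (Real.exp_le_one_iff.2 (hc x hx))).trans ?_
  exact Finset.single_le_sum (f := fun n => ‖c‖ ^ n) (fun _ _ => by positivity)
    (Finset.mem_range.2 (Nat.lt_succ_of_le hn))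

section Wirtinger

variable {f g : ℂ → ℂ} {a b z : ℂ}

theorem dbar_eq_of_hasFDerivAt
    (hf : HasFDerivAt f (a • ContinuousLinearMap.id ℝ ℂ + b • (conjCLE : ℂ →L[ℝ] ℂ)) z) :
    dbar f z = b := by
  rw [dbar, hf.fderiv]
  simp only [add_apply, smul_apply, ContinuousLinearMap.id_apply, smul_eq_mul, mul_one,
    ContinuousLinearEquiv.coe_coe, ContinuousAlgEquiv.coeCLE_apply, conjCAE_apply, map_one, conj_I]
  linear_combination (a - b) / 2 * I_sq

theorem dbar_eq_zero (hf : DifferentiableAt ℂ f z) : dbar f z = 0 := by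
  rw [dbar, hf.hasDerivAt.complexToReal_fderiv.fderiv]
  simp only [smul_apply, one_apply_eq_self, smul_eq_mul, mul_one]
  linear_combination deriv f z / 2 * I_sq

theorem dbar_mul (hf : DifferentiableAt ℝ f z) (hg : DifferentiableAt ℝ g z) :
    dbar (fun w => f w * g w) z = f z * dbar g z + g z * dbar f z := by
  simp only [dbar, fderiv_fun_mul hf hg, add_apply, smul_apply, smul_eq_mul]
  ring

theorem dbar_cexp (hf : DifferentiableAt ℝ f z) :
    dbar (fun w => cexp (f w)) z = cexp (f z) * dbar f z := by
  simp only [dbar, hf.hasFDerivAt.cexp.fderiv, smul_apply, smul_eq_mul]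
  ring

end Wirtinger

section Character

variable (k l z : ℂ)

theorem ek_add : ek (k + l) z = ek k z * ek l z := by
  rw [ek, ek, ek, ← exp_add, map_add]
  ring_nf

theorem ek_eq_cexp_inner : ek k z = cexp (I * (inner ℝ k z : ℝ)) := by
  rw [ek, Complex.inner, mul_comm z, re_eq_add_conj, map_mul, conj_conj, mul_div_assoc]

theorem norm_ek : ‖ek k z‖ = 1 := by
  rw [ek_eq_cexp_inner, norm_exp_I_mul_ofReal]

theorem hasTemperateGrowth_ek : (ek k).HasTemperateGrowth := by
  rw [funext (ek_eq_cexp_inner k)]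
  exact hasTemperateGrowth_cexp_const_mul (Function.hasTemperateGrowth_inner_right k)
    uniqueDiffOn_univ (Set.subset_univ _) (by simp)

theorem dbar_ek : dbar (ek k) z = I * k / 2 * ek k z := by
  have hphase : HasFDerivAt (fun z : ℂ => I * (conj k * z + k * conj z) / 2)
      ((I * conj k / 2) • ContinuousLinearMap.id ℝ ℂ +
        (I * k / 2) • (conjCLE : ℂ →L[ℝ] ℂ)) z := by
    have := ((hasFDerivAt_id (𝕜 := ℝ) z).const_mul (I * conj k / 2)).add
      ((conjCLE : ℂ →L[ℝ] ℂ).hasFDerivAt.const_mul (I * k / 2))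
    refine this.congr_of_eventuallyEq (Eventually.of_forall fun z => ?_)
    simp only [id_eq, ContinuousLinearEquiv.coe_coe, ContinuousAlgEquiv.coeCLE_apply,
      conjCAE_apply, Pi.add_apply]
    ring
  unfold ek
  rw [dbar_cexp hphase.differentiableAt, dbar_eq_of_hasFDerivAt hphase, mul_comm]

end Character

section CauchyTransform

variable {u v : ℂ → ℂ}

theorem dbarInv_add {z : ℂ} (hu : Integrable fun w => u w / (z - w))
    (hv : Integrable fun w => v w / (z - w)) :
    dbarInv (fun w => u w + v w) z = dbarInv u z + dbarInv v z := by
  simp only [dbarInv, add_div]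
  rw [integral_add hu hv, mul_add]

theorem dbarInv_const_mul (c : ℂ) (u : ℂ → ℂ) (z : ℂ) :
    dbarInv (fun w => c * u w) z = c * dbarInv u z := by
  simp only [dbarInv, mul_div_assoc]
  rw [integral_const_mul, mul_left_comm]

/-- The Cauchy–Riemann operator `∂̄` as an endomorphism of the Schwartz space. -/
noncomputable def dbarS (G : 𝓢(ℂ, ℂ)) : 𝓢(ℂ, ℂ) :=
  (2 : ℂ)⁻¹ • (LineDeriv.lineDerivOp (1 : ℂ) G + I • LineDeriv.lineDerivOp I G)

theorem coe_dbarS (G : 𝓢(ℂ, ℂ)) : ⇑(dbarS G) = dbar G := by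
  funext z
  simp only [dbarS, dbar, smul_apply, add_apply, smul_eq_mul,
    SchwartzMap.lineDerivOp_apply_eq_fderiv, div_eq_inv_mul]

/-- The product `e_k G` as a Schwartz function. -/
noncomputable def ekMul (k : ℂ) (G : 𝓢(ℂ, ℂ)) : 𝓢(ℂ, ℂ) :=
  SchwartzMap.smulLeftCLM ℂ (ek k) G

theorem ekMul_apply (k : ℂ) (G : 𝓢(ℂ, ℂ)) (z : ℂ) : ekMul k G z = ek k z * G z :=
  SchwartzMap.smulLeftCLM_apply_apply (hasTemperateGrowth_ek k) G z

theorem dbar_ekMul (k : ℂ) (G : 𝓢(ℂ, ℂ)) (z : ℂ) :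
    dbar (ekMul k G) z = ekMul k (dbarS G) z + I * k / 2 * ekMul k G z := by
  rw [funext (ekMul_apply k G), dbar_mul
    (((hasTemperateGrowth_ek k).1.differentiable (by simp)) z) G.differentiableAt, dbar_ek,
    ekMul_apply, coe_dbarS]
  ring

theorem integrable_schwartz_div_sub (G : 𝓢(ℂ, ℂ)) (z : ℂ) :
    Integrable fun w => G w / (z - w) :=
  integrable_div_sub G.continuous.measurable G.integrable (SchwartzMap.norm_le_seminorm ℝ G) z

theorem dbarInv_dbar_schwartz (G : 𝓢(ℂ, ℂ)) (z : ℂ) : dbarInv (dbar G) z = G z := by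
  have hnorm : ∀ w, ‖((‖fderiv ℝ G w‖ : ℝ) : ℂ)‖ = ‖fderiv ℝ G w‖ := by simp
  have hG' := (SchwartzMap.fderivCLM ℝ ℂ ℂ G).integrable (μ := volume) |>.norm.ofReal (𝕜 := ℂ)
  have hint := (integrable_div_sub (((G.smooth 1).continuous_fderiv one_ne_zero).measurable.norm
    |>.complex_ofReal) hG' (fun w => (hnorm w).trans_le
      (SchwartzMap.norm_le_seminorm ℝ (SchwartzMap.fderivCLM ℝ ℂ ℂ G) w)) z).norm
  exact dbarInv_dbar (G.smooth 1) (zero_at_infty G) (by simpa only [norm_div, hnorm] using hint)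

theorem dbarInv_ekMul {k : ℂ} (hk : k ≠ 0) (G : 𝓢(ℂ, ℂ)) (z : ℂ) :
    dbarInv (ekMul (-k) G) z =
      2 * I / k * (ekMul (-k) G z - dbarInv (ekMul (-k) (dbarS G)) z) := by
  have hdbar := dbarInv_dbar_schwartz (ekMul (-k) G) z
  have hint := (integrable_schwartz_div_sub (ekMul (-k) G) z).const_mul (I * -k / 2)
  simp only [← mul_div_assoc] at hint
  rw [funext (dbar_ekMul (-k) G), dbarInv_add (integrable_schwartz_div_sub _ z) hint,
    dbarInv_const_mul] at hdbar
  rw [← hdbar]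
  field_simp
  linear_combination k * dbarInv (ekMul (-k) G) z * I_sq

end CauchyTransform

section FourierTransform

open scoped FourierTransform LineDeriv

variable {f g : ℂ → ℂ}

theorem FT_eq_fourier (f : ℂ → ℂ) : FT f = FourierTransform.fourier f := by
  funext ξ
  rw [Real.fourier_eq', FT]
  congr 1 with z
  rw [smul_eq_mul, Complex.inner, mul_re, conj_re, conj_im]
  congr 2
  push_cast
  ring

theorem FTinv_eq_fourierInv (f : ℂ → ℂ) : FTinv f = FourierTransformInv.fourierInv f := by
  funext x
  rw [Real.fourierInv_eq', FTinv]
  congr 1 with z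
  rw [smul_eq_mul, Complex.inner, mul_re, conj_re, conj_im]
  congr 2
  push_cast
  ring

theorem FTinv_eq_FT_neg (f : ℂ → ℂ) (x : ℂ) : FTinv f x = FT f (-x) := by
  rw [FTinv_eq_fourierInv, FT_eq_fourier, Real.fourierInv_eq_fourier_neg]

theorem FT_eq_integral_ek (f : ℂ → ℂ) (ξ : ℂ) :
    FT f ξ = ∫ z, ek (-(2 * Real.pi * ξ)) z * f z := by
  rw [FT]
  congr 1 with z
  rw [ek_eq_cexp_inner, Complex.inner]
  congr 2
  simp only [neg_re, neg_im, mul_re, mul_im, conj_re, conj_im, re_ofNat, im_ofNat, ofReal_re,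
    ofReal_im, map_neg, ofReal_neg, ofReal_add, ofReal_mul, ofReal_sub, ofReal_zero, ofReal_ofNat]
  ring

theorem continuous_FT (hf : Integrable f) : Continuous (FT f) := by
  rw [FT_eq_fourier]
  exact VectorFourier.fourierIntegral_continuous (L := innerₗ ℂ) Real.continuous_fourierChar
    continuous_inner hf

theorem continuous_FTinv (hf : Integrable f) : Continuous (FTinv f) := by
  rw [funext (FTinv_eq_FT_neg f)]
  exact (continuous_FT hf).comp continuous_neg

theorem FT_schwartz (G : 𝓢(ℂ, ℂ)) : FT G = ⇑(FourierTransform.fourier G) := by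
  rw [FT_eq_fourier, SchwartzMap.fourier_coe]

theorem FTinv_schwartz (G : 𝓢(ℂ, ℂ)) : FTinv G = ⇑(FourierTransformInv.fourierInv G) := by
  rw [FTinv_eq_fourierInv, SchwartzMap.fourierInv_coe]

theorem FTinv_FT (G : 𝓢(ℂ, ℂ)) : FTinv (FT G) = G := by
  rw [FT_schwartz, FTinv_schwartz, FourierTransform.fourierInv_fourier_eq]

theorem inner_one_add_I_mul_inner_I (z : ℂ) :
    ((inner ℝ z 1 : ℝ) : ℂ) + I * (inner ℝ z I : ℝ) = z := by
  simp [Complex.inner, mul_comm I]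

theorem FT_dbarS (G : 𝓢(ℂ, ℂ)) (ξ : ℂ) : FT (dbarS G) ξ = Real.pi * I * ξ * FT G ξ := by
  have hderiv : ∀ v : ℂ, (𝓕 (∂_{v} G) : 𝓢(ℂ, ℂ)) ξ =
      2 * Real.pi * I * ((inner ℝ ξ v : ℝ) * (𝓕 G : 𝓢(ℂ, ℂ)) ξ) := by
    intro v
    rw [SchwartzMap.fourier_lineDerivOp_eq, smul_apply, SchwartzMap.smulLeftCLM_apply_apply
      (Function.hasTemperateGrowth_inner_left v), real_smul, smul_eq_mul]
  rw [FT_schwartz, FT_schwartz, dbarS, FourierTransform.fourier_smul, FourierTransform.fourier_add,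
    FourierTransform.fourier_smul]
  simp only [smul_apply, add_apply, smul_eq_mul, hderiv]
  linear_combination Real.pi * I * (𝓕 G : 𝓢(ℂ, ℂ)) ξ * inner_one_add_I_mul_inner_I ξ

theorem integrable_ek_mul (hf : Integrable f) (k : ℂ) : Integrable fun z => ek k z * f z :=
  hf.bdd_mul (hasTemperateGrowth_ek k).1.continuous.aestronglyMeasurable
    (ae_of_all _ fun z => (norm_ek k z).le)

theorem FT_id_mul (hf : Integrable f) (hf' : Integrable fun z => z * f z) (ξ : ℂ) :
    FT (fun z => z * f z) ξ = I / Real.pi * dbar (FT f) ξ := by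
  have hnorm : Integrable fun z => ‖z‖ * ‖f z‖ := by simpa only [norm_mul] using hf'.norm
  have hmul : Integrable (VectorFourier.fourierSMulRight (innerSL ℝ) f) := by
    refine (hnorm.const_mul (2 * Real.pi)).mono' hf.1.fourierSMulRight (ae_of_all _ fun z => ?_)
    rw [VectorFourier.norm_fourierSMulRight, innerSL_apply_norm, mul_assoc]
  have hderiv : ∀ v, fderiv ℝ (FT f) ξ v =
      FT (fun z => VectorFourier.fourierSMulRight (innerSL ℝ) f z v) ξ := by
    intro v
    rw [FT_eq_fourier, FT_eq_fourier, Real.fderiv_fourier hf hnorm,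
      Real.fourier_continuousLinearMap_apply hmul]
  have hint : ∀ v : ℂ, Integrable fun z => ek (-(2 * Real.pi * ξ)) z *
      VectorFourier.fourierSMulRight (innerSL ℝ) f z v :=
    fun v => integrable_ek_mul (hmul.apply_continuousLinearMap v) _
  rw [dbar, hderiv, hderiv]
  simp only [FT_eq_integral_ek]
  rw [← integral_const_mul, ← integral_add (hint 1) ((hint I).const_mul I), ← integral_div,
    ← integral_const_mul]
  congr 1 with z
  simp only [VectorFourier.fourierSMulRight_apply, innerSL_apply_apply ℝ, smul_eq_mul, real_smul]
  have := Real.pi_ne_zero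
  field_simp
  linear_combination ek (-(2 * Real.pi * ξ)) z * f z *
    (I ^ 2 * inner_one_add_I_mul_inner_I z + z * I_sq)

theorem integral_FT_mul (hf : Integrable f) (hg : Integrable g) :
    ∫ ξ, FT f ξ * g ξ = ∫ z, f z * FT g z := by
  rw [FT_eq_fourier, FT_eq_fourier]
  simpa using! VectorFourier.integral_fourierIntegral_smul_eq_flip (L := innerₗ ℂ)
      Real.continuous_fourierChar continuous_inner hf hg

theorem integral_mul_FTinv_sub (hf : Integrable f) (hg : Integrable g) (x : ℂ) :
    ∫ y, f y * FTinv g (x - y) = FTinv (fun ξ => FT f ξ * g ξ) x := by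
  have hmod : Integrable fun ξ => ek (2 * Real.pi * x) ξ * g ξ :=
    integrable_ek_mul hg _
  have hshift : ∀ y, FTinv g (x - y) = FT (fun ξ => ek (2 * Real.pi * x) ξ * g ξ) y := by
    intro y
    rw [FTinv_eq_FT_neg, FT_eq_integral_ek, FT_eq_integral_ek]
    congr 1 with ξ
    rw [← mul_assoc, ← ek_add]
    ring_nf
  simp only [hshift]
  rw [← integral_FT_mul hf hmod, FTinv_eq_FT_neg, FT_eq_integral_ek]
  congr 1 with ξ
  ring_nf

end FourierTransform

section HeatKernel

/-- The symbol `e^{-4π²|ξ|²t}` of the heat semigroup `e^{tΔ}`. -/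
noncomputable def heatSymbol (t : ℝ) (ξ : ℂ) : ℝ :=
  Real.exp (-(4 * Real.pi ^ 2 * t) * ‖ξ‖ ^ 2)

variable {t τ : ℝ}

theorem heatSymbol_add (t τ : ℝ) (ξ : ℂ) :
    heatSymbol (t + τ) ξ = heatSymbol t ξ * heatSymbol τ ξ := by
  rw [heatSymbol, heatSymbol, heatSymbol, ← Real.exp_add]
  ring_nf

theorem hasTemperateGrowth_heatSymbol (ht : 0 ≤ t) :
    (fun ξ => (heatSymbol t ξ : ℂ)).HasTemperateGrowth := by
  have hsymbol : ∀ ξ, (heatSymbol t ξ : ℂ) =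
      cexp ((-(4 * Real.pi ^ 2 * t) : ℝ) * (‖ξ‖ ^ 2 : ℝ)) := by
    intro ξ
    rw [heatSymbol, ofReal_exp, ofReal_mul]
  rw [funext hsymbol]
  refine hasTemperateGrowth_cexp_const_mul (Function.hasTemperateGrowth_norm_sq ℂ)
    (uniqueDiffOn_Ici 0) (Set.range_subset_iff.2 fun ξ => sq_nonneg ‖ξ‖) fun x hx => ?_
  rw [ofReal_re]
  exact mul_nonpos_of_nonpos_of_nonneg (neg_nonpos.2 (by positivity)) hx

theorem dbar_heatSymbol (t : ℝ) (ξ : ℂ) :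
    dbar (fun ξ => (heatSymbol t ξ : ℂ)) ξ = -(4 * Real.pi ^ 2 * t) * ξ * heatSymbol t ξ := by
  set c : ℂ := -(4 * Real.pi ^ 2 * t)
  have hsymbol : ∀ ξ, (heatSymbol t ξ : ℂ) = cexp (c * (ξ * conj ξ)) := by
    intro ξ
    rw [heatSymbol, Complex.mul_conj, Complex.normSq_eq_norm_sq]
    push_cast
    rfl
  have hphase : HasFDerivAt (fun ξ : ℂ => c * (ξ * conj ξ))
      ((c * conj ξ) • ContinuousLinearMap.id ℝ ℂ + (c * ξ) • (conjCLE : ℂ →L[ℝ] ℂ)) ξ := by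
    convert! ((hasFDerivAt_id (𝕜 := ℝ) ξ).mul
      (conjCLE : ℂ →L[ℝ] ℂ).hasFDerivAt).const_mul c using 1
    ext
    simp only [add_apply, smul_apply, ContinuousLinearMap.id_apply, smul_eq_mul, id_eq, smul_add,
      ContinuousLinearEquiv.coe_coe, ContinuousAlgEquiv.coeCLE_apply, conjCAE_apply]
    ring
  simp only [hsymbol]
  rw [dbar_cexp hphase.differentiableAt, dbar_eq_of_hasFDerivAt hphase, mul_comm]

/-- The `j`-th `∂̄`-derivative of the two-dimensional heat kernel at time `τ`. -/
noncomputable def heatKernel (j : ℕ) (τ : ℝ) (z : ℂ) : ℂ :=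
  (-z / (4 * τ)) ^ j * ((4 * Real.pi * τ)⁻¹ * Real.exp (-(4 * τ)⁻¹ * ‖z‖ ^ 2) : ℝ)

theorem heatKernel_succ (j : ℕ) (τ : ℝ) (z : ℂ) :
    heatKernel (j + 1) τ z = -(4 * τ : ℂ)⁻¹ * (z * heatKernel j τ z) := by
  rw [heatKernel, heatKernel, pow_succ]
  ring

theorem norm_heatKernel (hτ : 0 < τ) (j : ℕ) (z : ℂ) : ‖heatKernel j τ z‖ =
    (‖z‖ / (4 * τ)) ^ j * ((4 * Real.pi * τ)⁻¹ * Real.exp (-(4 * τ)⁻¹ * ‖z‖ ^ 2)) := by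
  have := Real.pi_pos
  rw [heatKernel, norm_mul, norm_pow, norm_div, norm_neg, norm_mul, norm_real, norm_ofNat,
    norm_real, Real.norm_of_nonneg hτ.le, Real.norm_of_nonneg (by positivity)]

theorem measurable_uncurry_heatKernel (j : ℕ) :
    Measurable (Function.uncurry (heatKernel j)) := by
  unfold heatKernel Function.uncurry
  fun_prop

theorem measurable_heatKernel (j : ℕ) (τ : ℝ) : Measurable (heatKernel j τ) :=
  (measurable_uncurry_heatKernel j).of_uncurry_left

theorem integrable_heatKernel (hτ : 0 < τ) (j : ℕ) : Integrable (heatKernel j τ) := by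
  have hgauss : Integrable fun z : ℂ => ‖z‖ ^ j * Real.exp (-(4 * τ)⁻¹ * ‖z‖ ^ 2) := by
    have hj : (0 : ℝ) < (j + 2) / 2 := by positivity
    refine Integrable.of_integral_ne_zero ?_
    simp_rw [← Real.rpow_natCast, Nat.cast_ofNat]
    rw [Complex.integral_rpow_mul_exp_neg_mul_rpow one_le_two
      (by linarith [Nat.cast_nonneg (α := ℝ) j]) (by positivity)]
    have := Real.Gamma_pos_of_pos hj
    have := Real.pi_pos
    positivity
  refine (hgauss.const_mul ((4 * τ)⁻¹ ^ j * (4 * Real.pi * τ)⁻¹)).mono'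
    (measurable_heatKernel j τ).aestronglyMeasurable (ae_of_all _ fun z => le_of_eq ?_)
  rw [norm_heatKernel hτ, div_eq_mul_inv, mul_pow]
  ring

theorem integral_norm_heatKernel_zero (hτ : 0 < τ) : ∫ z, ‖heatKernel 0 τ z‖ = 1 := by
  simp only [norm_heatKernel hτ, pow_zero, one_mul]
  rw [integral_const_mul, GaussianFourier.integral_rexp_neg_mul_sq_norm (by positivity),
    Complex.finrank_real_complex, Nat.cast_ofNat, div_self two_ne_zero, Real.rpow_one]
  have := Real.pi_pos
  field_simp

theorem lintegral_enorm_heatKernel_zero (hτ : 0 < τ) : ∫⁻ z, ‖heatKernel 0 τ z‖ₑ = 1 := by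
  rw [← ofReal_integral_norm_eq_lintegral_enorm (integrable_heatKernel hτ 0),
    integral_norm_heatKernel_zero hτ, ENNReal.ofReal_one]

theorem FT_const_mul (c : ℂ) (f : ℂ → ℂ) (ξ : ℂ) :
    FT (fun z => c * f z) ξ = c * FT f ξ := by
  simp only [FT, mul_left_comm _ c]
  exact integral_const_mul c _

theorem FT_heatKernel_zero (hτ : 0 < τ) (ξ : ℂ) : FT (heatKernel 0 τ) ξ = heatSymbol τ ξ := by
  have hgauss : heatKernel 0 τ = fun z : ℂ =>
      (4 * Real.pi * τ : ℂ)⁻¹ * cexp (-((4 * τ)⁻¹ : ℝ) * ‖z‖ ^ 2) := by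
    funext z
    simp [heatKernel]
  have hre : 0 < (((4 * τ)⁻¹ : ℝ) : ℂ).re := by
    rw [ofReal_re]
    positivity
  rw [hgauss, FT_const_mul, FT_eq_fourier, fourier_gaussian_innerProductSpace hre,
    Complex.finrank_real_complex, Nat.cast_ofNat, div_self two_ne_zero, cpow_one, heatSymbol]
  have := ofReal_ne_zero.2 Real.pi_ne_zero
  have := ofReal_ne_zero.2 hτ.ne'
  push_cast
  field_simp

theorem FT_heatKernel (hτ : 0 < τ) (j : ℕ) (ξ : ℂ) :
    FT (heatKernel j τ) ξ = (Real.pi * I * ξ) ^ j * heatSymbol τ ξ := by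
  have hτ' := ofReal_ne_zero.2 hτ.ne'
  induction j generalizing ξ with
  | zero => rw [FT_heatKernel_zero hτ, pow_zero, one_mul]
  | succ j ih =>
    have hmul : Integrable fun z => z * heatKernel j τ z := by
      refine ((integrable_heatKernel hτ (j + 1)).const_mul (-(4 * τ : ℂ))).congr
        (ae_of_all _ fun z => ?_)
      simp only [heatKernel_succ]
      field_simp
    have hpow : DifferentiableAt ℂ (fun ξ : ℂ => (Real.pi * I * ξ) ^ j) ξ := by fun_prop
    have hsymbol := ((hasTemperateGrowth_heatSymbol hτ.le).1.differentiable (by simp)) ξ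
    rw [funext (heatKernel_succ j τ), FT_const_mul, FT_id_mul (integrable_heatKernel hτ j) hmul,
      funext ih, dbar_mul (hpow.restrictScalars ℝ) hsymbol, dbar_eq_zero hpow, dbar_heatSymbol]
    have := ofReal_ne_zero.2 Real.pi_ne_zero
    field_simp
    ring

end HeatKernel

section Subordination

variable {s τ : ℝ} {ξ : ℂ}

/-- The density in `τ` which writes the symbol `|ξ|^{-s}` as a superposition of the heat symbols
`e^{-4π²|ξ|²τ}`. -/
noncomputable def subordinationDensity (s τ : ℝ) : ℝ :=
  (2 * Real.pi) ^ s / Real.Gamma (s / 2) * τ ^ (s / 2 - 1)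

theorem subordinationDensity_nonneg (hs : 0 < s) (hτ : 0 < τ) :
    0 ≤ subordinationDensity s τ := by
  have := Real.Gamma_pos_of_pos (half_pos hs)
  have := Real.pi_pos
  rw [subordinationDensity]
  positivity

theorem measurable_subordinationDensity (s : ℝ) : Measurable (subordinationDensity s) := by
  unfold subordinationDensity
  fun_prop

theorem integral_subordinationDensity_mul_heatSymbol (hs : 0 < s) (hξ : ξ ≠ 0) :
    ∫ τ in Set.Ioi 0, subordinationDensity s τ * heatSymbol τ ξ = ‖ξ‖ ^ (-s) := by
  have hnorm : 0 < ‖ξ‖ := norm_pos_iff.2 hξ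
  have hΓ := (Real.Gamma_pos_of_pos (half_pos hs)).ne'
  have := Real.pi_pos
  have hsq : (2 * Real.pi * ‖ξ‖) ^ 2 = 4 * Real.pi ^ 2 * ‖ξ‖ ^ 2 := by ring
  have hexp : ∀ τ, subordinationDensity s τ * heatSymbol τ ξ =
      (2 * Real.pi) ^ s / Real.Gamma (s / 2) *
        (τ ^ (s / 2 - 1) * Real.exp (-((2 * Real.pi * ‖ξ‖) ^ 2 * τ))) := by
    intro τ
    rw [subordinationDensity, heatSymbol, hsq]
    ring_nf
  simp only [hexp]
  rw [integral_const_mul, Real.integral_rpow_mul_exp_neg_mul_Ioi (half_pos hs) (by positivity),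
    one_div, ← Real.rpow_natCast, Nat.cast_ofNat, Real.inv_rpow (by positivity),
    ← Real.rpow_mul (by positivity), mul_div_cancel₀ s two_ne_zero,
    Real.mul_rpow (by positivity) hnorm.le, Real.rpow_neg hnorm.le]
  field_simp

theorem integral_subordinationDensity_mul_heatSymbol_mul_norm_rpow (hs : 0 < s) (hξ : ξ ≠ 0) :
    ∫ τ in Set.Ioi 0, subordinationDensity s τ * heatSymbol τ ξ * ‖ξ‖ ^ s = 1 := by
  rw [integral_mul_const, integral_subordinationDensity_mul_heatSymbol hs hξ,
    ← Real.rpow_add (norm_pos_iff.2 hξ), neg_add_cancel, Real.rpow_zero]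

theorem integrable_subordinationDensity_mul_heatSymbol_mul (hs : 0 < s) {g : ℂ → ℂ}
    (hg : Integrable g) :
    Integrable (fun x : ℝ × ℂ =>
      ((subordinationDensity s x.1 * heatSymbol x.1 x.2 * ‖x.2‖ ^ s : ℝ) : ℂ) * g x.2)
      ((volume.restrict (Set.Ioi 0)).prod volume) := by
  have hmeas : Measurable fun x : ℝ × ℂ =>
      ((subordinationDensity s x.1 * heatSymbol x.1 x.2 * ‖x.2‖ ^ s : ℝ) : ℂ) := by
    unfold subordinationDensity heatSymbol
    fun_prop
  have hprod := (hmeas.aestronglyMeasurable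
    (μ := (volume.restrict (Set.Ioi (0 : ℝ))).prod volume)).fun_mul hg.1.comp_snd
  refine (integrable_prod_iff' hprod).2 ⟨?_, ?_⟩
  · filter_upwards [Measure.ae_ne volume 0] with ξ hξ
    have hint : Integrable (fun τ => subordinationDensity s τ * heatSymbol τ ξ * ‖ξ‖ ^ s)
        (volume.restrict (Set.Ioi 0)) := by
      refine Integrable.of_integral_ne_zero ?_
      rw [integral_subordinationDensity_mul_heatSymbol_mul_norm_rpow hs hξ]
      exact one_ne_zero
    exact hint.ofReal.mul_const _
  · refine hg.norm.congr ?_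
    filter_upwards [Measure.ae_ne volume 0] with ξ hξ
    have hnorm : ∀ τ ∈ Set.Ioi (0 : ℝ),
        ‖((subordinationDensity s τ * heatSymbol τ ξ * ‖ξ‖ ^ s : ℝ) : ℂ) * g ξ‖ =
          subordinationDensity s τ * heatSymbol τ ξ * ‖ξ‖ ^ s * ‖g ξ‖ := by
      intro τ hτ
      have := subordinationDensity_nonneg hs hτ
      have : 0 < heatSymbol τ ξ := Real.exp_pos _
      rw [norm_mul, norm_real, Real.norm_of_nonneg (by positivity)]
    rw [setIntegral_congr_fun measurableSet_Ioi hnorm, integral_mul_const,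
      integral_subordinationDensity_mul_heatSymbol_mul_norm_rpow hs hξ, one_mul]

theorem integral_integral_subordinationDensity_mul_heatSymbol_mul (hs : 0 < s) {g : ℂ → ℂ}
    (hg : Integrable g) :
    ∫ τ in Set.Ioi 0, ∫ ξ, ((subordinationDensity s τ * heatSymbol τ ξ * ‖ξ‖ ^ s : ℝ) : ℂ) * g ξ =
      ∫ ξ, g ξ := by
  rw [integral_integral_swap (integrable_subordinationDensity_mul_heatSymbol_mul hs hg)]
  refine integral_congr_ae ?_
  filter_upwards [Measure.ae_ne volume 0] with ξ hξ
  rw [integral_mul_const, integral_complex_ofReal,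
    integral_subordinationDensity_mul_heatSymbol_mul_norm_rpow hs hξ, ofReal_one, one_mul]

theorem integrable_FT_schwartz (G : 𝓢(ℂ, ℂ)) : Integrable (FT G) := by
  rw [FT_schwartz]
  exact SchwartzMap.integrable _

theorem integrable_norm_rpow_mul_FT (hs : 0 ≤ s) (G : 𝓢(ℂ, ℂ)) :
    Integrable fun ξ => ((‖ξ‖ ^ s : ℝ) : ℂ) * FT G ξ := by
  have hpow := SchwartzMap.integrable_pow_mul volume (FourierTransform.fourier G) ⌈s⌉₊
  rw [← FT_schwartz] at hpow
  have hmeas : Measurable fun ξ : ℂ => ((‖ξ‖ ^ s : ℝ) : ℂ) := by fun_prop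
  refine ((integrable_FT_schwartz G).norm.add hpow).mono'
    (hmeas.aestronglyMeasurable.mul (integrable_FT_schwartz G).1) (ae_of_all _ fun ξ => ?_)
  have hle : ‖ξ‖ ^ s ≤ 1 + ‖ξ‖ ^ ⌈s⌉₊ := by
    rcases le_total ‖ξ‖ 1 with hξ | hξ
    · exact (Real.rpow_le_one (norm_nonneg ξ) hξ hs).trans (by simp)
    · rw [← Real.rpow_natCast]
      exact (Real.rpow_le_rpow_of_exponent_le hξ (Nat.le_ceil s)).trans (by simp)
  rw [norm_mul, norm_real, Real.norm_of_nonneg (by positivity)]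
  exact (mul_le_mul_of_nonneg_right hle (norm_nonneg _)).trans_eq (by rw [add_mul, one_mul]; rfl)

theorem continuous_Ds (hs : 0 ≤ s) (G : 𝓢(ℂ, ℂ)) : Continuous (Ds s G) :=
  continuous_FTinv (integrable_norm_rpow_mul_FT hs G)

/-- The factorization `e^{τΔ} F = κ_τ * G` for all times `τ > 0`, expressed on the Fourier side. -/
structure IsHeatFactorization (κ : ℝ → ℂ → ℂ) (G F : 𝓢(ℂ, ℂ)) : Prop where
  measurable : Measurable (Function.uncurry κ)
  integrable : ∀ τ, 0 < τ → Integrable (κ τ)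
  FT_mul_FT : ∀ τ, 0 < τ → ∀ ξ, FT (κ τ) ξ * FT G ξ = heatSymbol τ ξ * FT F ξ

namespace IsHeatFactorization

variable {κ : ℝ → ℂ → ℂ} {G F : 𝓢(ℂ, ℂ)}

theorem integral_mul_Ds_sub (h : IsHeatFactorization κ G F) (hs : 0 < s) (hτ : 0 < τ) (x : ℂ) :
    subordinationDensity s τ * ∫ y, κ τ y * Ds s G (x - y) =
      ∫ ξ, ((subordinationDensity s τ * heatSymbol τ ξ * ‖ξ‖ ^ s : ℝ) : ℂ) *
        (ek (2 * Real.pi * x) ξ * FT F ξ) := by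
  rw [Ds, integral_mul_FTinv_sub (h.integrable τ hτ) (integrable_norm_rpow_mul_FT hs.le G),
    FTinv_eq_FT_neg, FT_eq_integral_ek, ← integral_const_mul]
  congr 1 with ξ
  rw [mul_neg, neg_neg]
  push_cast
  linear_combination (subordinationDensity s τ * ek (2 * Real.pi * x) ξ * (‖ξ‖ ^ s : ℝ)) *
    h.FT_mul_FT τ hτ ξ

theorem eq_integral_subordinationDensity_mul (h : IsHeatFactorization κ G F) (hs : 0 < s) (x : ℂ) :
    F x = ∫ τ in Set.Ioi 0, subordinationDensity s τ * ∫ y, κ τ y * Ds s G (x - y) := by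
  rw [setIntegral_congr_fun measurableSet_Ioi fun τ hτ => h.integral_mul_Ds_sub hs hτ x,
    integral_integral_subordinationDensity_mul_heatSymbol_mul hs
      (integrable_ek_mul (integrable_FT_schwartz F) _)]
  nth_rw 1 [← FTinv_FT F]
  rw [FTinv_eq_FT_neg, FT_eq_integral_ek, mul_neg, neg_neg]

end IsHeatFactorization

/-- The majorant of the convolution kernel that recovers `F` from `D^s G` when
`e^{τΔ} F = κ_τ * G`. -/
noncomputable def subordinationKernel (s : ℝ) (κ : ℝ → ℂ → ℂ) (y : ℂ) : ℝ≥0∞ :=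
  ∫⁻ τ in Set.Ioi 0, ENNReal.ofReal (subordinationDensity s τ) * ‖κ τ y‖ₑ

theorem measurable_subordinationKernel (s : ℝ) {κ : ℝ → ℂ → ℂ}
    (hκ : Measurable (Function.uncurry κ)) : Measurable (subordinationKernel s κ) :=
  Measurable.lintegral_prod_left
    (((measurable_subordinationDensity s).comp measurable_fst).ennreal_ofReal.mul hκ.enorm)

theorem IsHeatFactorization.enorm_le_lconvolution {κ : ℝ → ℂ → ℂ} {G F : 𝓢(ℂ, ℂ)}
    (h : IsHeatFactorization κ G F) (hs : 0 < s) (x : ℂ) :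
    ‖F x‖ₑ ≤ (subordinationKernel s κ ⋆ₗ[volume] fun y => ‖Ds s G y‖ₑ) x := by
  have hD := (continuous_Ds hs.le G).measurable
  have hκ := h.measurable
  have hmeas : Measurable fun y : ℝ × ℂ =>
      ENNReal.ofReal (subordinationDensity s y.1) * ‖κ y.1 y.2‖ₑ :=
    ((measurable_subordinationDensity s).comp measurable_fst).ennreal_ofReal.mul hκ.enorm
  calc ‖F x‖ₑ
      ≤ ∫⁻ τ in Set.Ioi 0, ‖(subordinationDensity s τ : ℂ) * ∫ y, κ τ y * Ds s G (x - y)‖ₑ := by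
        nth_rw 1 [h.eq_integral_subordinationDensity_mul hs x]
        exact enorm_integral_le_lintegral_enorm _
    _ ≤ ∫⁻ τ in Set.Ioi 0, ∫⁻ y,
          ENNReal.ofReal (subordinationDensity s τ) * ‖κ τ y‖ₑ * ‖Ds s G (x - y)‖ₑ := by
        refine setLIntegral_mono' measurableSet_Ioi fun τ hτ => ?_
        simp only [mul_assoc]
        have hκτ : Measurable (κ τ) := hκ.of_uncurry_left
        rw [lintegral_const_mul _ (by fun_prop), enorm_mul,
          ← ofReal_norm, norm_real, Real.norm_of_nonneg (subordinationDensity_nonneg hs hτ)]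
        refine mul_le_mul_right ((enorm_integral_le_lintegral_enorm _).trans_eq ?_) _
        simp only [enorm_mul]
    _ = ∫⁻ y, ∫⁻ τ in Set.Ioi 0,
          ENNReal.ofReal (subordinationDensity s τ) * ‖κ τ y‖ₑ * ‖Ds s G (x - y)‖ₑ :=
        lintegral_lintegral_swap (hmeas.mul (by fun_prop)).aemeasurable
    _ = (subordinationKernel s κ ⋆ₗ[volume] fun y => ‖Ds s G y‖ₑ) x := by
        refine lintegral_congr fun y => ?_
        have hτ : Measurable fun τ => ENNReal.ofReal (subordinationDensity s τ) * ‖κ τ y‖ₑ :=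
          hmeas.comp measurable_prodMk_right
        rw [lintegral_mul_const _ hτ, neg_add_eq_sub]
        rfl

end Subordination

section KernelEstimates

variable {s t τ : ℝ}

theorem norm_heatKernel_zero_le (hτ : 0 < τ) (y : ℂ) :
    ‖heatKernel 0 τ y‖ ≤ (τ + ‖y‖ ^ 2)⁻¹ := by
  have hpi : 1 ≤ Real.pi := by linarith [Real.pi_gt_three]
  have hexp : Real.exp (-(4 * τ)⁻¹ * ‖y‖ ^ 2) ≤ ((4 * τ)⁻¹ * ‖y‖ ^ 2 + 1)⁻¹ := by
    rw [neg_mul, Real.exp_neg]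
    exact inv_anti₀ (by positivity) (Real.add_one_le_exp _)
  rw [norm_heatKernel hτ, pow_zero, one_mul]
  calc (4 * Real.pi * τ)⁻¹ * Real.exp (-(4 * τ)⁻¹ * ‖y‖ ^ 2)
      ≤ (4 * Real.pi * τ)⁻¹ * ((4 * τ)⁻¹ * ‖y‖ ^ 2 + 1)⁻¹ := by gcongr
    _ = (Real.pi * (4 * τ + ‖y‖ ^ 2))⁻¹ := by field_simp; ring
    _ ≤ (τ + ‖y‖ ^ 2)⁻¹ := by
      refine inv_anti₀ (by positivity) ?_
      nlinarith [sq_nonneg ‖y‖]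

theorem norm_heatKernel_one_le (hτ : 0 < τ) (y : ℂ) :
    ‖heatKernel 1 τ y‖ ≤ τ⁻¹ * ‖y‖⁻¹ := by
  rcases eq_or_ne y 0 with rfl | hy
  · simp [heatKernel]
  have : 0 < ‖y‖ := norm_pos_iff.2 hy
  calc ‖heatKernel 1 τ y‖ = (4 * τ)⁻¹ * (‖y‖ * ‖heatKernel 0 τ y‖) := by
        rw [heatKernel_succ, norm_mul, norm_mul, norm_neg, norm_inv, norm_mul, norm_ofNat,
          norm_real, Real.norm_of_nonneg hτ.le]
    _ ≤ τ⁻¹ * (‖y‖ * (‖y‖ ^ 2)⁻¹) := by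
        gcongr
        · linarith
        · exact (norm_heatKernel_zero_le hτ y).trans (inv_anti₀ (by positivity) (by linarith))
    _ = τ⁻¹ * ‖y‖⁻¹ := by field_simp

theorem norm_heatKernel_two_le (hτ : 0 < τ) (y : ℂ) :
    ‖heatKernel 2 τ y‖ ≤ τ⁻¹ * ‖heatKernel 0 (2 * τ) y‖ := by
  have := Real.pi_pos
  set u := (4 * (2 * τ))⁻¹ * ‖y‖ ^ 2 with hu
  have hexp : Real.exp (-(4 * τ)⁻¹ * ‖y‖ ^ 2) = Real.exp (-u) * Real.exp (-u) := by
    rw [← Real.exp_add, hu]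
    ring_nf
  have hone : u * Real.exp (-u) ≤ 1 := by
    rw [Real.exp_neg, ← div_eq_mul_inv, div_le_one (Real.exp_pos u)]
    linarith [Real.add_one_le_exp u]
  rw [norm_heatKernel hτ, norm_heatKernel (by positivity), hexp, pow_zero, one_mul, neg_mul, ← hu]
  calc (‖y‖ / (4 * τ)) ^ 2 * ((4 * Real.pi * τ)⁻¹ * (Real.exp (-u) * Real.exp (-u)))
      = τ⁻¹ * ((4 * Real.pi * (2 * τ))⁻¹ * Real.exp (-u)) * (u * Real.exp (-u)) := by
        rw [hu]
        field_simp
        norm_num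
    _ ≤ τ⁻¹ * ((4 * Real.pi * (2 * τ))⁻¹ * Real.exp (-u)) :=
        mul_le_of_le_one_right (by positivity) hone

theorem lintegral_enorm_heatKernel_two_le (hτ : 0 < τ) :
    ∫⁻ y, ‖heatKernel 2 τ y‖ₑ ≤ ENNReal.ofReal τ⁻¹ := by
  calc ∫⁻ y, ‖heatKernel 2 τ y‖ₑ
      ≤ ∫⁻ y, ENNReal.ofReal τ⁻¹ * ‖heatKernel 0 (2 * τ) y‖ₑ := by
        refine lintegral_mono fun y => ?_
        rw [← ofReal_norm, ← ofReal_norm, ← ENNReal.ofReal_mul (by positivity)]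
        exact ENNReal.ofReal_le_ofReal (norm_heatKernel_two_le hτ y)
    _ = ENNReal.ofReal τ⁻¹ := by
        rw [lintegral_const_mul _ (measurable_heatKernel 0 _).enorm,
          lintegral_enorm_heatKernel_zero (by positivity), mul_one]

theorem mul_heatKernel_zero_le (hτ : 0 < τ) (ht : 0 ≤ t) (y : ℂ) :
    τ / (τ + t) * ‖heatKernel 0 τ y‖ ≤ ‖heatKernel 0 (τ + t) y‖ := by
  have := Real.pi_pos
  rw [norm_heatKernel hτ, norm_heatKernel (by positivity), pow_zero, pow_zero, one_mul, one_mul]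
  calc τ / (τ + t) * ((4 * Real.pi * τ)⁻¹ * Real.exp (-(4 * τ)⁻¹ * ‖y‖ ^ 2))
      = (4 * Real.pi * (τ + t))⁻¹ * Real.exp (-(4 * τ)⁻¹ * ‖y‖ ^ 2) := by field_simp
    _ ≤ (4 * Real.pi * (τ + t))⁻¹ * Real.exp (-(4 * (τ + t))⁻¹ * ‖y‖ ^ 2) := by
      gcongr
      linarith

theorem norm_heatKernel_zero_sub_le (hτ : 0 < τ) (ht : 0 ≤ t) (y : ℂ) :
    ‖heatKernel 0 τ y - heatKernel 0 (τ + t) y‖ ≤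
      (2 * t / (τ + t) - 1) * ‖heatKernel 0 τ y‖ + ‖heatKernel 0 (τ + t) y‖ := by
  have hτt : 0 < τ + t := by positivity
  have hreal : ∀ {σ}, 0 < σ → heatKernel 0 σ y = (‖heatKernel 0 σ y‖ : ℝ) := by
    intro σ hσ
    rw [norm_heatKernel hσ, heatKernel, pow_zero, pow_zero, one_mul, one_mul]
  have hlower := mul_heatKernel_zero_le hτ ht y
  have hsplit : τ / (τ + t) = 1 - t / (τ + t) := by field_simp; ring
  have hnonneg : 0 ≤ t / (τ + t) * ‖heatKernel 0 τ y‖ := by positivity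
  rw [hsplit] at hlower
  rw [hreal hτ, hreal hτt, ← ofReal_sub, norm_real, norm_real, norm_real, norm_norm, norm_norm,
    mul_div_assoc]
  exact abs_le.2 ⟨by linarith, by linarith⟩

theorem lintegral_enorm_heatKernel_zero_sub_le (hτ : 0 < τ) (ht : 0 ≤ t) :
    ∫⁻ y, ‖heatKernel 0 τ y - heatKernel 0 (τ + t) y‖ₑ ≤
      ENNReal.ofReal (2 * t) * ENNReal.ofReal (τ + t)⁻¹ := by
  have hτt : 0 < τ + t := by positivity
  have hnorm := (integrable_heatKernel hτ 0).norm.const_mul (2 * t / (τ + t) - 1)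
  have hnorm' := (integrable_heatKernel hτt 0).norm
  have hsub := (integrable_heatKernel hτ 0).sub (integrable_heatKernel hτt 0)
  have hle : ∫ y, ‖heatKernel 0 τ y - heatKernel 0 (τ + t) y‖ ≤ 2 * t * (τ + t)⁻¹ := by
    refine (integral_mono hsub.norm (hnorm.add hnorm')
      (norm_heatKernel_zero_sub_le hτ ht)).trans_eq ?_
    simp only [Pi.add_apply]
    rw [integral_add hnorm hnorm', integral_const_mul, integral_norm_heatKernel_zero hτ,
      integral_norm_heatKernel_zero hτt]
    ring
  rw [← ENNReal.ofReal_mul (by positivity)]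
  exact (ofReal_integral_norm_eq_lintegral_enorm hsub).symm.trans_le (ENNReal.ofReal_le_ofReal hle)

theorem setLIntegral_Ioi_rpow_mul_inv_add_le {γ a : ℝ} (hγ : 0 < γ) (hγ' : γ < 1) (ha : 0 < a) :
    ∫⁻ τ in Set.Ioi 0, ENNReal.ofReal (τ ^ (γ - 1)) * ENNReal.ofReal (τ + a)⁻¹ ≤
      ENNReal.ofReal ((γ⁻¹ + (1 - γ)⁻¹) * a ^ (γ - 1)) := by
  have : 0 < 1 - γ := by linarith
  have hnear : ∀ τ ∈ Set.Ioo 0 a, ENNReal.ofReal (τ ^ (γ - 1)) * ENNReal.ofReal (τ + a)⁻¹ ≤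
      ENNReal.ofReal (τ ^ (γ - 1)) * ENNReal.ofReal a⁻¹ := fun τ hτ => by
    gcongr
    linarith [hτ.1]
  have hfar : ∀ τ ∈ Set.Ioi a, ENNReal.ofReal (τ ^ (γ - 1)) * ENNReal.ofReal (τ + a)⁻¹ ≤
      ENNReal.ofReal (τ ^ (γ - 2)) := by
    intro τ (hτ : a < τ)
    have hτ0 : 0 < τ := ha.trans hτ
    rw [← ENNReal.ofReal_mul (by positivity), show γ - 2 = γ - 1 - 1 by ring,
      Real.rpow_sub_one hτ0.ne' (γ - 1), div_eq_mul_inv]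
    gcongr
    linarith
  rw [← Set.Ioc_union_Ioi_eq_Ioi ha.le]
  refine (lintegral_union_le _ _ _).trans ?_
  rw [← setLIntegral_congr Ioo_ae_eq_Ioc]
  refine (add_le_add (setLIntegral_mono' measurableSet_Ioo hnear)
    (setLIntegral_mono' measurableSet_Ioi hfar)).trans_eq ?_
  rw [lintegral_mul_const _ (by fun_prop), setLIntegral_Ioo_ofReal_rpow (by linarith) ha.le,
    setLIntegral_Ioi_ofReal_rpow (by linarith) ha, show γ - 2 + 1 = -(1 - γ) by ring,
    neg_div_neg_eq, sub_add_cancel, ← ENNReal.ofReal_mul (by positivity),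
    ← ENNReal.ofReal_add (by positivity) (by positivity), neg_sub, Real.rpow_sub_one ha.ne']
  congr 1
  ring

theorem exists_setLIntegral_subordinationDensity_mul_inv_add_le (hs : 0 < s) (hs' : s < 2) :
    ∃ B : ℝ, 0 < B ∧ ∀ a : ℝ, 0 < a →
      ∫⁻ τ in Set.Ioi 0, ENNReal.ofReal (subordinationDensity s τ) * ENNReal.ofReal (τ + a)⁻¹ ≤
        ENNReal.ofReal (B * a ^ (s / 2 - 1)) := by
  have := Real.Gamma_pos_of_pos (half_pos hs)
  have := Real.pi_pos
  have hs1 : 0 < 1 - s / 2 := by linarith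
  refine ⟨(2 * Real.pi) ^ s / Real.Gamma (s / 2) * ((s / 2)⁻¹ + (1 - s / 2)⁻¹), by positivity,
    fun a ha => ?_⟩
  have hconst : 0 ≤ (2 * Real.pi) ^ s / Real.Gamma (s / 2) := by positivity
  simp only [subordinationDensity, ENNReal.ofReal_mul hconst, mul_assoc]
  rw [lintegral_const_mul' _ _ ENNReal.ofReal_ne_top]
  gcongr
  exact setLIntegral_Ioi_rpow_mul_inv_add_le (half_pos hs) (by linarith) ha

end KernelEstimates

section HeatRegularization

variable {s t τ p : ℝ}

theorem FT_sub {f g : ℂ → ℂ} (hf : Integrable f) (hg : Integrable g) (ξ : ℂ) :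
    FT (fun z => f z - g z) ξ = FT f ξ - FT g ξ := by
  simp only [FT_eq_integral_ek, mul_sub]
  exact integral_sub (integrable_ek_mul hf _) (integrable_ek_mul hg _)

/-- The heat regularization `e^{tΔ} G` of a Schwartz function. -/
noncomputable def heatReg (t : ℝ) (G : 𝓢(ℂ, ℂ)) : 𝓢(ℂ, ℂ) :=
  SchwartzMap.fourierMultiplierCLM ℂ (fun ξ => (heatSymbol t ξ : ℂ)) G

theorem FT_heatReg (ht : 0 ≤ t) (G : 𝓢(ℂ, ℂ)) (ξ : ℂ) :
    FT (heatReg t G) ξ = heatSymbol t ξ * FT G ξ := by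
  rw [FT_schwartz, FT_schwartz, heatReg, SchwartzMap.fourierMultiplierCLM_apply,
    FourierTransform.fourier_fourierInv_eq,
    SchwartzMap.smulLeftCLM_apply_apply (hasTemperateGrowth_heatSymbol ht), smul_eq_mul]

theorem FT_dbarS_iterate (j : ℕ) (G : 𝓢(ℂ, ℂ)) (ξ : ℂ) :
    FT (dbarS^[j] G) ξ = (Real.pi * I * ξ) ^ j * FT G ξ := by
  induction j with
  | zero => rw [Function.iterate_zero_apply, pow_zero, one_mul]
  | succ j ih =>
    rw [Function.iterate_succ_apply', FT_dbarS, ih]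
    ring

theorem measurable_uncurry_heatKernel_add (j : ℕ) (t : ℝ) :
    Measurable (Function.uncurry fun τ => heatKernel j (τ + t)) := by
  unfold heatKernel Function.uncurry
  fun_prop

theorem isHeatFactorization_dbarS_iterate_heatReg (ht : 0 ≤ t) (j : ℕ) (G : 𝓢(ℂ, ℂ)) :
    IsHeatFactorization (fun τ => heatKernel j (τ + t)) G (dbarS^[j] (heatReg t G)) where
  measurable := measurable_uncurry_heatKernel_add j t
  integrable τ hτ := integrable_heatKernel (by positivity) j
  FT_mul_FT τ hτ ξ := by
    rw [FT_heatKernel (by positivity), FT_dbarS_iterate, FT_heatReg ht, heatSymbol_add]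
    push_cast
    ring

theorem isHeatFactorization_sub_heatReg (ht : 0 ≤ t) (G : 𝓢(ℂ, ℂ)) :
    IsHeatFactorization (fun τ y => heatKernel 0 τ y - heatKernel 0 (τ + t) y) G
      (G - heatReg t G) where
  measurable := (measurable_uncurry_heatKernel 0).sub (measurable_uncurry_heatKernel_add 0 t)
  integrable τ hτ := (integrable_heatKernel hτ 0).sub (integrable_heatKernel (by positivity) 0)
  FT_mul_FT τ hτ ξ := by
    have hsub : FT (G - heatReg t G : 𝓢(ℂ, ℂ)) ξ = FT G ξ - FT (heatReg t G) ξ :=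
      FT_sub G.integrable (heatReg t G).integrable ξ
    rw [FT_sub (integrable_heatKernel hτ 0) (integrable_heatKernel (by positivity) 0),
      FT_heatKernel_zero hτ, FT_heatKernel_zero (by positivity), hsub, FT_heatReg ht,
      heatSymbol_add]
    push_cast
    ring

theorem subordinationKernel_le {κ : ℝ → ℂ → ℂ} {y : ℂ} {B c a : ℝ} (hc : 0 ≤ c)
    (hκ : ∀ τ, 0 < τ → ‖κ τ y‖ ≤ c * (τ + a)⁻¹)
    (hB : ∫⁻ τ in Set.Ioi 0, ENNReal.ofReal (subordinationDensity s τ) * ENNReal.ofReal (τ + a)⁻¹ ≤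
      ENNReal.ofReal B) :
    subordinationKernel s κ y ≤ ENNReal.ofReal (c * B) := by
  have hbound : ∀ τ ∈ Set.Ioi (0 : ℝ), ENNReal.ofReal (subordinationDensity s τ) * ‖κ τ y‖ₑ ≤
      ENNReal.ofReal c *
        (ENNReal.ofReal (subordinationDensity s τ) * ENNReal.ofReal (τ + a)⁻¹) := by
    intro τ hτ
    rw [mul_left_comm, ← ENNReal.ofReal_mul hc, ← ofReal_norm]
    gcongr
    exact hκ τ hτ
  refine (setLIntegral_mono' measurableSet_Ioi hbound).trans ?_
  rw [lintegral_const_mul' _ _ ENNReal.ofReal_ne_top, ENNReal.ofReal_mul hc]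
  gcongr

theorem lintegral_subordinationKernel_le {κ : ℝ → ℂ → ℂ} (hmeas : Measurable (Function.uncurry κ))
    {B c a : ℝ} (hc : 0 ≤ c)
    (hκ : ∀ τ, 0 < τ → ∫⁻ y, ‖κ τ y‖ₑ ≤ ENNReal.ofReal c * ENNReal.ofReal (τ + a)⁻¹)
    (hB : ∫⁻ τ in Set.Ioi 0, ENNReal.ofReal (subordinationDensity s τ) * ENNReal.ofReal (τ + a)⁻¹ ≤
      ENNReal.ofReal B) :
    ∫⁻ y, subordinationKernel s κ y ≤ ENNReal.ofReal (c * B) := by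
  have hprod : Measurable fun x : ℂ × ℝ =>
      ENNReal.ofReal (subordinationDensity s x.2) * ‖κ x.2 x.1‖ₑ :=
    ((measurable_subordinationDensity s).comp measurable_snd).ennreal_ofReal.mul
      (hmeas.comp measurable_swap).enorm
  have hbound : ∀ τ ∈ Set.Ioi (0 : ℝ),
      ∫⁻ y, ENNReal.ofReal (subordinationDensity s τ) * ‖κ τ y‖ₑ ≤ ENNReal.ofReal c *
        (ENNReal.ofReal (subordinationDensity s τ) * ENNReal.ofReal (τ + a)⁻¹) := by
    intro τ hτ
    rw [lintegral_const_mul' _ _ ENNReal.ofReal_ne_top, mul_left_comm]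
    gcongr
    exact hκ τ hτ
  simp only [subordinationKernel]
  rw [lintegral_lintegral_swap hprod.aemeasurable]
  refine (setLIntegral_mono' measurableSet_Ioi hbound).trans ?_
  rw [lintegral_const_mul' _ _ ENNReal.ofReal_ne_top, ENNReal.ofReal_mul hc]
  gcongr

theorem IsHeatFactorization.eLpNorm_le {κ : ℝ → ℂ → ℂ} {G F : 𝓢(ℂ, ℂ)}
    (h : IsHeatFactorization κ G F) (hs : 0 < s) {q : ℝ} (hq : 1 ≤ q) :
    eLpNorm F (ENNReal.ofReal q) volume ≤
      (∫⁻ y, subordinationKernel s κ y) * eLpNorm (Ds s G) (ENNReal.ofReal q) volume := by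
  rw [← eLpNorm_enorm (Ds s G)]
  exact (eLpNorm_mono_enorm (h.enorm_le_lconvolution hs)).trans (eLpNorm_lconvolution_le
    (measurable_subordinationKernel s h.measurable) (continuous_Ds hs.le G).measurable.enorm hq)

theorem exists_eLpNorm_le_of_subordinationKernel_le (hp : 2 < p) :
    ∃ C : ℝ, 0 < C ∧ ∀ {s : ℝ} {κ : ℝ → ℂ → ℂ} {G F : 𝓢(ℂ, ℂ)}, IsHeatFactorization κ G F →
      0 < s → ∀ {a : ℝ}, (∀ y ≠ 0, subordinationKernel s κ y ≤ ENNReal.ofReal a * ‖y‖ₑ⁻¹) →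
        eLpNorm F (ENNReal.ofReal p) volume ≤ ENNReal.ofReal a *
          (ENNReal.ofReal C * eLpNorm (Ds s G) (ENNReal.ofReal (2 * p / (p + 2))) volume) := by
  obtain ⟨C, hC, hHLS⟩ := exists_eLpNorm_enorm_inv_lconvolution_le hp
  refine ⟨C, hC, fun {s κ G F} h hs {a} hκ => ?_⟩
  have hbound : ∀ x, ‖F x‖ₑ ≤ ENNReal.ofReal a *
      ((fun y : ℂ => ‖y‖ₑ⁻¹) ⋆ₗ[volume] fun y => ‖Ds s G y‖ₑ) x := by
    intro x
    refine (h.enorm_le_lconvolution hs x).trans ?_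
    rw [lconvolution_def, lconvolution_def, ← lintegral_const_mul' _ _ ENNReal.ofReal_ne_top]
    refine lintegral_mono_ae ?_
    filter_upwards [Measure.ae_ne volume 0] with y hy
    rw [← mul_assoc]
    gcongr
    exact hκ y hy
  have hHLS := hHLS _ (continuous_Ds hs.le G).measurable.enorm
  rw [eLpNorm_enorm] at hHLS
  exact (eLpNorm_le_mul_eLpNorm_of_ae_le_mul' (ae_of_all _ hbound) _).trans
    (mul_le_mul_right hHLS _)

end HeatRegularization

section HeatRegularizationBounds

variable {s t p : ℝ}

theorem add_sq_rpow_le (hs : s ≤ 1) (ht : 0 < t) {r : ℝ} (hr : 0 < r) :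
    (t + r ^ 2) ^ (s / 2 - 1) ≤ t ^ ((s - 1) / 2) * r⁻¹ := by
  have hsqrt : (r ^ 2) ^ (-(1 / 2) : ℝ) = r⁻¹ := by
    rw [← Real.rpow_natCast, ← Real.rpow_mul hr.le, ← Real.rpow_neg_one]
    norm_num
  rw [show s / 2 - 1 = (s - 1) / 2 + -(1 / 2) by ring, Real.rpow_add (by positivity), ← hsqrt]
  gcongr ?_ * ?_
  · exact Real.rpow_le_rpow_of_nonpos ht (by linarith [sq_nonneg r]) (by linarith)
  · exact Real.rpow_le_rpow_of_nonpos (by positivity) (by linarith) (by norm_num)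

theorem ofReal_mul_enorm_inv {y : ℂ} (hy : y ≠ 0) (a : ℝ) :
    ENNReal.ofReal a * ‖y‖ₑ⁻¹ = ENNReal.ofReal (a * ‖y‖⁻¹) := by
  rw [← ofReal_norm, ← ENNReal.ofReal_inv_of_pos (norm_pos_iff.2 hy),
    ENNReal.ofReal_mul' (by positivity)]

theorem exists_eLpNorm_heatReg_le (hs : 0 < s) (hs1 : s ≤ 1) (hp : 2 < p) :
    ∃ C : ℝ, 0 < C ∧ ∀ (t : ℝ) (G : 𝓢(ℂ, ℂ)), 0 < t →
      eLpNorm (heatReg t G) (ENNReal.ofReal p) volume ≤ ENNReal.ofReal (C * t ^ ((s - 1) / 2)) *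
        eLpNorm (Ds s G) (ENNReal.ofReal (2 * p / (p + 2))) volume := by
  obtain ⟨C, hC, hHLS⟩ := exists_eLpNorm_le_of_subordinationKernel_le hp
  obtain ⟨B, hB, htime⟩ :=
    exists_setLIntegral_subordinationDensity_mul_inv_add_le hs (by linarith)
  refine ⟨B * C, by positivity, fun t G ht => ?_⟩
  rw [mul_right_comm, ENNReal.ofReal_mul (by positivity), mul_assoc]
  refine hHLS (isHeatFactorization_dbarS_iterate_heatReg ht.le 0 G) hs fun y hy => ?_
  have hκ : ∀ τ, 0 < τ → ‖heatKernel 0 (τ + t) y‖ ≤ 1 * (τ + (t + ‖y‖ ^ 2))⁻¹ := fun τ hτ => by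
    rw [one_mul, ← add_assoc]
    exact norm_heatKernel_zero_le (by positivity) y
  refine (subordinationKernel_le zero_le_one hκ (htime _ (by positivity))).trans ?_
  rw [ofReal_mul_enorm_inv hy, one_mul, mul_assoc]
  gcongr
  exact add_sq_rpow_le hs1 ht (norm_pos_iff.2 hy)

theorem exists_eLpNorm_dbarS_heatReg_le (hs : 0 < s) (hs2 : s < 2) (hp : 2 < p) :
    ∃ C : ℝ, 0 < C ∧ ∀ (t : ℝ) (G : 𝓢(ℂ, ℂ)), 0 < t →
      eLpNorm (dbarS (heatReg t G)) (ENNReal.ofReal p) volume ≤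
        ENNReal.ofReal (C * t ^ (s / 2 - 1)) *
          eLpNorm (Ds s G) (ENNReal.ofReal (2 * p / (p + 2))) volume := by
  obtain ⟨C, hC, hHLS⟩ := exists_eLpNorm_le_of_subordinationKernel_le hp
  obtain ⟨B, hB, htime⟩ := exists_setLIntegral_subordinationDensity_mul_inv_add_le hs hs2
  refine ⟨B * C, by positivity, fun t G ht => ?_⟩
  rw [mul_right_comm, ENNReal.ofReal_mul (by positivity), mul_assoc]
  refine hHLS (isHeatFactorization_dbarS_iterate_heatReg ht.le 1 G) hs fun y hy => ?_
  have hκ : ∀ τ, 0 < τ → ‖heatKernel 1 (τ + t) y‖ ≤ ‖y‖⁻¹ * (τ + t)⁻¹ := fun τ hτ => by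
    rw [mul_comm]
    exact norm_heatKernel_one_le (by positivity) y
  rw [ofReal_mul_enorm_inv hy, mul_comm _ ‖y‖⁻¹]
  exact subordinationKernel_le (by positivity) hκ (htime t ht)

theorem exists_eLpNorm_dbarS_dbarS_heatReg_le (hs : 0 < s) (hs2 : s < 2) :
    ∃ C : ℝ, 0 < C ∧ ∀ (q t : ℝ) (G : 𝓢(ℂ, ℂ)), 1 ≤ q → 0 < t →
      eLpNorm (dbarS (dbarS (heatReg t G))) (ENNReal.ofReal q) volume ≤
        ENNReal.ofReal (C * t ^ (s / 2 - 1)) * eLpNorm (Ds s G) (ENNReal.ofReal q) volume := by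
  obtain ⟨B, hB, htime⟩ := exists_setLIntegral_subordinationDensity_mul_inv_add_le hs hs2
  refine ⟨B, hB, fun q t G hq ht => ?_⟩
  have hfact := isHeatFactorization_dbarS_iterate_heatReg ht.le 2 G
  refine (hfact.eLpNorm_le hs hq).trans ?_
  have hκ : ∀ τ, 0 < τ → ∫⁻ y, ‖heatKernel 2 (τ + t) y‖ₑ ≤
      ENNReal.ofReal 1 * ENNReal.ofReal (τ + t)⁻¹ := fun τ hτ => by
    rw [ENNReal.ofReal_one, one_mul]
    exact lintegral_enorm_heatKernel_two_le (by positivity)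
  gcongr
  rw [← one_mul (B * _)]
  exact lintegral_subordinationKernel_le hfact.measurable zero_le_one hκ (htime t ht)

theorem exists_eLpNorm_sub_heatReg_le (hs : 0 < s) (hs2 : s < 2) :
    ∃ C : ℝ, 0 < C ∧ ∀ (q t : ℝ) (G : 𝓢(ℂ, ℂ)), 1 ≤ q → 0 < t →
      eLpNorm (G - heatReg t G : 𝓢(ℂ, ℂ)) (ENNReal.ofReal q) volume ≤
        ENNReal.ofReal (C * t ^ (s / 2)) * eLpNorm (Ds s G) (ENNReal.ofReal q) volume := by
  obtain ⟨B, hB, htime⟩ := exists_setLIntegral_subordinationDensity_mul_inv_add_le hs hs2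
  refine ⟨2 * B, by positivity, fun q t G hq ht => ?_⟩
  have hfact := isHeatFactorization_sub_heatReg ht.le G
  refine (hfact.eLpNorm_le hs hq).trans ?_
  have htpow : 2 * B * t ^ (s / 2) = 2 * t * (B * t ^ (s / 2 - 1)) := by
    rw [Real.rpow_sub_one ht.ne']
    field_simp
  gcongr
  rw [htpow]
  exact lintegral_subordinationKernel_le hfact.measurable (by positivity)
    (fun τ hτ => lintegral_enorm_heatKernel_zero_sub_le hτ ht.le) (htime t ht)

end HeatRegularizationBounds

section HighFrequency

variable {s p : ℝ} {k : ℂ}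

theorem eLpNorm_ekMul (k : ℂ) (G : 𝓢(ℂ, ℂ)) (q : ℝ≥0∞) :
    eLpNorm (ekMul k G) q volume = eLpNorm G q volume :=
  eLpNorm_congr_norm_ae (ae_of_all _ fun z => by rw [ekMul_apply, norm_mul, norm_ek, one_mul])

theorem aestronglyMeasurable_dbarInv_schwartz (G : 𝓢(ℂ, ℂ)) :
    AEStronglyMeasurable (dbarInv G) volume :=
  (stronglyMeasurable_dbarInv G.continuous.stronglyMeasurable).aestronglyMeasurable

theorem exists_eLpNorm_dbarInv_ekMul_le (hp : 2 < p) :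
    ∃ C : ℝ, 0 < C ∧ ∀ (k : ℂ) (G : 𝓢(ℂ, ℂ)),
      eLpNorm (dbarInv (ekMul k G)) (ENNReal.ofReal p) volume ≤
        ENNReal.ofReal C * eLpNorm G (ENNReal.ofReal (2 * p / (p + 2))) volume := by
  obtain ⟨C, hC, hHLS⟩ := exists_eLpNorm_dbarInv_le hp
  refine ⟨C, hC, fun k G => ?_⟩
  rw [← eLpNorm_ekMul k G]
  exact hHLS _ (ekMul k G).continuous.measurable

theorem dbarInv_ekMul_eq_add (k : ℂ) (G F : 𝓢(ℂ, ℂ)) :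
    dbarInv (ekMul k G) = dbarInv (ekMul k (G - F)) + dbarInv (ekMul k F) := by
  funext z
  rw [Pi.add_apply, ← dbarInv_add (integrable_schwartz_div_sub _ z)
    (integrable_schwartz_div_sub _ z)]
  congr 1 with w
  rw [ekMul_apply, ekMul_apply, ekMul_apply, sub_apply]
  ring

theorem eLpNorm_dbarInv_ekMul_le_add {q : ℝ≥0∞} (hq : 1 ≤ q) (hk : k ≠ 0) (F : 𝓢(ℂ, ℂ)) :
    eLpNorm (dbarInv (ekMul (-k) F)) q volume ≤ ENNReal.ofReal (2 / ‖k‖) *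
      (eLpNorm F q volume + eLpNorm (dbarInv (ekMul (-k) (dbarS F))) q volume) := by
  have hparts : dbarInv (ekMul (-k) F) =
      (2 * I / k) • (⇑(ekMul (-k) F) - dbarInv (ekMul (-k) (dbarS F))) :=
    funext fun z => dbarInv_ekMul hk F z
  have hcoef : ‖2 * I / k‖ₑ = ENNReal.ofReal (2 / ‖k‖) := by
    rw [← ofReal_norm, norm_div, norm_mul, norm_ofNat, norm_I, mul_one]
  rw [hparts, eLpNorm_const_smul, hcoef, ← eLpNorm_ekMul (-k) F]
  gcongr
  exact eLpNorm_sub_le (ekMul (-k) F).continuous.aestronglyMeasurable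
    (aestronglyMeasurable_dbarInv_schwartz _) hq

theorem eLpNorm_dbarInv_ekMul_le_decomposition {q : ℝ≥0∞} (hq : 1 ≤ q) {k : ℂ} (hk : k ≠ 0)
    (G F : 𝓢(ℂ, ℂ)) :
    eLpNorm (dbarInv (ekMul (-k) G)) q volume ≤
      eLpNorm (dbarInv (ekMul (-k) (G - F))) q volume + ENNReal.ofReal (2 / ‖k‖) *
        (eLpNorm F q volume + ENNReal.ofReal (2 / ‖k‖) * (eLpNorm (dbarS F) q volume +
          eLpNorm (dbarInv (ekMul (-k) (dbarS (dbarS F)))) q volume)) := by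
  rw [dbarInv_ekMul_eq_add (-k) G F]
  refine (eLpNorm_add_le (aestronglyMeasurable_dbarInv_schwartz _)
    (aestronglyMeasurable_dbarInv_schwartz _) hq).trans ?_
  gcongr
  refine (eLpNorm_dbarInv_ekMul_le_add hq hk F).trans ?_
  gcongr
  exact eLpNorm_dbarInv_ekMul_le_add hq hk (dbarS F)

theorem ofReal_mul_add_nested {a₀ a₁ a₂ a₃ c : ℝ} (h₀ : 0 ≤ a₀) (h₁ : 0 ≤ a₁) (h₂ : 0 ≤ a₂)
    (h₃ : 0 ≤ a₃) (hc : 0 ≤ c) (N : ℝ≥0∞) :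
    ENNReal.ofReal a₀ * N + ENNReal.ofReal c * (ENNReal.ofReal a₁ * N +
        ENNReal.ofReal c * (ENNReal.ofReal a₂ * N + ENNReal.ofReal a₃ * N)) =
      ENNReal.ofReal (a₀ + c * (a₁ + c * (a₂ + a₃))) * N := by
  rw [ENNReal.ofReal_add h₀ (by positivity), ENNReal.ofReal_mul hc,
    ENNReal.ofReal_add h₁ (by positivity), ENNReal.ofReal_mul hc, ENNReal.ofReal_add h₂ h₃]
  ring

theorem rpow_neg_two_rpow {r : ℝ} (hr : 0 < r) (s : ℝ) :
    (r ^ (-2 : ℝ)) ^ (s / 2) = r ^ (-s) ∧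
      (r ^ (-2 : ℝ)) ^ ((s - 1) / 2) = r ^ (-s) * r ∧
      (r ^ (-2 : ℝ)) ^ (s / 2 - 1) = r ^ (-s) * r ^ 2 := by
  simp only [← Real.rpow_mul hr.le]
  refine ⟨by ring_nf, ?_, ?_⟩
  · rw [← Real.rpow_add_one hr.ne']
    ring_nf
  · rw [← Real.rpow_natCast, ← Real.rpow_add hr]
    push_cast
    ring_nf

theorem exists_eLpNorm_dbarInv_ekMul_neg_le (hs : 0 < s) (hs1 : s ≤ 1) (hp : 2 < p) :
    ∃ C : ℝ, 0 < C ∧ ∀ (G : 𝓢(ℂ, ℂ)) (k : ℂ), k ≠ 0 →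
      eLpNorm (dbarInv (ekMul (-k) G)) (ENNReal.ofReal p) volume ≤
        ENNReal.ofReal (C * ‖k‖ ^ (-s)) *
          eLpNorm (Ds s G) (ENNReal.ofReal (2 * p / (p + 2))) volume := by
  have hs2 : s < 2 := by linarith
  obtain ⟨H, hH, hHLS⟩ := exists_eLpNorm_dbarInv_ekMul_le hp
  obtain ⟨A, hA, hsub⟩ := exists_eLpNorm_sub_heatReg_le hs hs2
  obtain ⟨A₀, hA₀, hreg⟩ := exists_eLpNorm_heatReg_le hs hs1 hp
  obtain ⟨A₁, hA₁, hreg'⟩ := exists_eLpNorm_dbarS_heatReg_le hs hs2 hp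
  obtain ⟨A₂, hA₂, hreg''⟩ := exists_eLpNorm_dbarS_dbarS_heatReg_le hs hs2
  refine ⟨H * A + 2 * A₀ + 4 * A₁ + 4 * (H * A₂), by positivity, fun G k hk => ?_⟩
  have hr : 0 < ‖k‖ := norm_pos_iff.2 hk
  have hq : 1 ≤ 2 * p / (p + 2) := (one_le_div (by linarith)).2 (by linarith)
  set t := ‖k‖ ^ (-2 : ℝ)
  have ht : 0 < t := by positivity
  obtain ⟨hpow, hpow₀, hpow₁⟩ := rpow_neg_two_rpow hr s
  refine (eLpNorm_dbarInv_ekMul_le_decomposition (ENNReal.one_le_ofReal.2 (by linarith)) hk G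
    (heatReg t G)).trans ((add_le_add ((hHLS _ _).trans (mul_le_mul_right (hsub _ t G hq ht) _))
      (mul_le_mul_right (add_le_add (hreg t G ht) (mul_le_mul_right (add_le_add (hreg' t G ht)
        ((hHLS _ _).trans (mul_le_mul_right (hreg'' _ t G hq ht) _))) _)) _)).trans_eq ?_)
  rw [← mul_assoc (ENNReal.ofReal H), ← mul_assoc (ENNReal.ofReal H), ← ENNReal.ofReal_mul hH.le,
    ← ENNReal.ofReal_mul hH.le, ofReal_mul_add_nested (by positivity) (by positivity)
      (by positivity) (by positivity) (by positivity), hpow, hpow₀, hpow₁]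
  congr 2
  field_simp
  ring

theorem rpow_neg_le_two_mul (hs : 0 ≤ s) (hs1 : s ≤ 1) {r x : ℝ} (hx : 0 ≤ x)
    (hxr : 1 + x ≤ 2 * r) : r ^ (-s) ≤ 2 * (1 + x) ^ (-s) := by
  have htwo : (2 : ℝ) ^ s ≤ 2 :=
    (Real.rpow_le_rpow_of_exponent_le one_le_two hs1).trans_eq (Real.rpow_one 2)
  calc r ^ (-s) ≤ ((1 + x) / 2) ^ (-s) :=
        Real.rpow_le_rpow_of_nonpos (by linarith) (by linarith) (by linarith)
    _ = 2 ^ s * (1 + x) ^ (-s) := by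
        rw [Real.div_rpow (by linarith) zero_le_two, Real.rpow_neg zero_le_two s, div_inv_eq_mul,
          mul_comm]
    _ ≤ 2 * (1 + x) ^ (-s) := by gcongr

end HighFrequency

/-- Estimate \eqref{isitgood0}:
`‖∂̄⁻¹[e_{-k} G]‖_p ≤ C (1+|k|)^{-s} (‖G‖_{2p/(p+2)} + ‖D^s G‖_{2p/(p+2)})`. -/
theorem stmt3 (s : ℝ) (hs0 : 0 ≤ s) (hs1 : s ≤ 1) (p : ℝ) (hp : 2 < p) :
    ∃ C : ℝ, 0 < C ∧ ∀ (G : 𝓢(ℂ, ℂ)) (k : ℂ),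
      eLpNorm (dbarInv fun z => ek (-k) z * G z) (ENNReal.ofReal p) volume ≤
        ENNReal.ofReal (C * (1 + ‖k‖) ^ (-s)) *
          (eLpNorm (⇑G) (ENNReal.ofReal (2 * p / (p + 2))) volume +
            eLpNorm (Ds s (⇑G)) (ENNReal.ofReal (2 * p / (p + 2))) volume) := by
  simp only [← ekMul_apply]
  obtain ⟨H, hH, hlow⟩ := exists_eLpNorm_dbarInv_ekMul_le hp
  rcases hs0.eq_or_lt with rfl | hs
  · refine ⟨H, hH, fun G k => (hlow (-k) G).trans ?_⟩
    rw [neg_zero, Real.rpow_zero, mul_one]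
    gcongr
    exact le_self_add
  obtain ⟨K, hK, hhigh⟩ := exists_eLpNorm_dbarInv_ekMul_neg_le hs hs1 hp
  refine ⟨2 * H + 2 * K, by positivity, fun G k => ?_⟩
  have hpos : 0 < (1 + ‖k‖) ^ (-s) := by positivity
  rcases le_total ‖k‖ 1 with hk | hk
  · have hone := rpow_neg_le_two_mul hs0 hs1 (norm_nonneg k) (by linarith : 1 + ‖k‖ ≤ 2 * 1)
    rw [Real.one_rpow] at hone
    exact (hlow (-k) G).trans
      (mul_le_mul' (ENNReal.ofReal_le_ofReal (by nlinarith)) le_self_add)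
  · have hdecay := rpow_neg_le_two_mul hs0 hs1 (norm_nonneg k) (by linarith : 1 + ‖k‖ ≤ 2 * ‖k‖)
    exact (hhigh G k (norm_pos_iff.1 (by linarith))).trans
      (mul_le_mul' (ENNReal.ofReal_le_ofReal (by nlinarith)) le_add_self)
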